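/- Let μ be as in the class {μ}, so in particular μ(1/δ) ≥ (7/δ) ln(1/δ). Then there exist constants c₀ ∈ ℝ, C > 0 and δ₀ > 0 such that for all δ ∈ (0, δ₀]: |∫₀^{μ(1/δ)} |ζ(1/2+it)|² e^{−2δt} dt − (1/(2δ)) ln(1/δ) − D/(2δ) − c₀| ≤ C δ ln(1/δ), where D = c − ln(4π) and c is the Euler–Mascheroni constant. -/

import Mathlib

open MeasureTheory Filter Real Set

/-- `Z(t)² = |ζ(1/2 + it)|²`, the square of Hardy's function. -/
noncomputable def Z2 (t : ℝ) : ℝ := ‖riemannZeta (1/2 + t * Complex.I)‖ ^ 2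

/-!
On the ray `arg z = θ` with `|θ| < π / 2`, the function `1 / (exp z - 1) - 1 / z` has Mellin
transform `a ^ (-s) Γ(s) ζ(s)` for `0 < re s < 1`, where `a = exp (iθ)`. Plancherel's theorem on the
line `re s = 1 / 2` turns its `L²` norm into the mean square of `ζ` against the weight
`cosh (2θt) / cosh (πt)`, and for `θ = π / 2 - δ` replacing this weight by `exp (-2δt)` costs
`O(δ)`. On the other side, the addition formula for `1 / (exp z - 1)` splits the `L²` norm into
values of Mellin transforms, which produce `(c - log (4π sin δ)) / (2 sin δ)` and a constant up to
`O(δ)`, and a Laplace integral which is `O(δ)`. The integral beyond `μ(1/δ)` is at most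
`exp (-δ μ(1/δ)) ∫ Z2 t exp (-δt) dt`.
-/

namespace TKA

open scoped Topology FourierTransform ComplexConjugate

lemma ne_zero_of_re_pos {z : ℂ} (hz : 0 < z.re) : z ≠ 0 := by
  rintro rfl
  simp at hz

lemma re_mul_ofReal_pos {a : ℂ} (ha : 0 < a.re) {x : ℝ} (hx : 0 < x) : 0 < (a * x).re := by
  simpa using mul_pos ha hx

section EulerIntegral

variable {s r : ℂ}

lemma norm_cpow_mul_cexp_neg_mul {t : ℝ} (ht : 0 < t) :
    ‖(t : ℂ) ^ (s - 1) * Complex.exp (-(r * t))‖ = t ^ (s.re - 1) * Real.exp (-(r.re * t)) := by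
  rw [norm_mul, Complex.norm_cpow_eq_rpow_re_of_pos ht, Complex.norm_exp]
  simp

lemma continuousOn_cpow_sub_one : ContinuousOn (fun t : ℝ => (t : ℂ) ^ (s - 1)) (Ioi 0) :=
  fun _ ht => (Complex.continuousAt_ofReal_cpow_const _ _
    (Or.inr (ne_of_gt ht))).continuousWithinAt

lemma integrableOn_cpow_mul_cexp_neg_mul (hs : 0 < s.re) (hr : 0 < r.re) :
    IntegrableOn (fun t : ℝ => (t : ℂ) ^ (s - 1) * Complex.exp (-(r * t))) (Ioi 0) := by
  refine Integrable.mono' (integrableOn_rpow_mul_exp_neg_mul_rpow (p := 1) (s := s.re - 1)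
    (b := r.re) (by linarith) one_pos hr)
    ((continuousOn_cpow_sub_one.mul (by fun_prop)).aestronglyMeasurable measurableSet_Ioi) ?_
  filter_upwards [ae_restrict_mem measurableSet_Ioi] with t ht
  rw [norm_cpow_mul_cexp_neg_mul ht, Real.rpow_one, neg_mul]

lemma differentiableAt_integral_cpow_mul_cexp_neg_mul (hs : 0 < s.re) (hr : 0 < r.re) :
    DifferentiableAt ℂ
      (fun r : ℂ => ∫ t in Ioi (0 : ℝ), (t : ℂ) ^ (s - 1) * Complex.exp (-(r * t))) r := by
  have hball {z : ℂ} (hz : z ∈ Metric.ball r (r.re / 2)) : r.re / 2 ≤ z.re := by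
    have := (Complex.abs_re_le_norm (z - r)).trans (mem_ball_iff_norm.1 hz).le
    rw [Complex.sub_re, abs_le] at this
    linarith
  refine (hasDerivAt_integral_of_dominated_loc_of_deriv_le (μ := volume.restrict (Ioi 0))
    (F := fun (r : ℂ) (t : ℝ) => (t : ℂ) ^ (s - 1) * Complex.exp (-(r * t)))
    (F' := fun (r : ℂ) (t : ℝ) => (t : ℂ) ^ (s - 1) * (Complex.exp (-(r * t)) * (-t)))
    (bound := fun t => t ^ s.re * Real.exp (-(r.re / 2) * t ^ (1 : ℝ)))
    (Metric.ball_mem_nhds r (half_pos hr)) ?_ (integrableOn_cpow_mul_cexp_neg_mul hs hr)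
    ((continuousOn_cpow_sub_one.mul (by fun_prop)).aestronglyMeasurable measurableSet_Ioi)
    ?_ (integrableOn_rpow_mul_exp_neg_mul_rpow (by linarith) one_pos (half_pos hr))
    ?_).2.differentiableAt
  · filter_upwards [Metric.ball_mem_nhds r (half_pos hr)] with z hz
    exact (integrableOn_cpow_mul_cexp_neg_mul hs
      ((half_pos hr).trans_le (hball hz))).aestronglyMeasurable
  · filter_upwards [ae_restrict_mem measurableSet_Ioi] with t (ht : 0 < t) z hz
    rw [← mul_assoc, norm_mul, norm_cpow_mul_cexp_neg_mul ht, norm_neg, Complex.norm_real,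
      Real.norm_of_nonneg ht.le, Real.rpow_one, mul_right_comm, ← Real.rpow_add_one ht.ne',
      sub_add_cancel]
    gcongr
    nlinarith [hball hz]
  · filter_upwards with t z _
    have : HasDerivAt (fun z : ℂ => -(z * t)) (-(t : ℂ)) z := by
      simpa using! ((hasDerivAt_id z).mul_const (t : ℂ)).neg
    exact this.cexp.const_mul _

/-- Both sides are holomorphic in `r` and agree for real `r`. -/
lemma integral_cpow_mul_cexp_neg_mul (hs : 0 < s.re) (hr : 0 < r.re) :
    ∫ t in Ioi (0 : ℝ), (t : ℂ) ^ (s - 1) * Complex.exp (-(r * t)) =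
      r ^ (-s) * Complex.Gamma s := by
  have hopen : IsOpen {z : ℂ | 0 < z.re} := isOpen_lt continuous_const Complex.continuous_re
  have hl : DifferentiableOn ℂ (fun r : ℂ => ∫ t in Ioi (0 : ℝ),
      (t : ℂ) ^ (s - 1) * Complex.exp (-(r * t))) {z | 0 < z.re} := fun r hr =>
    (differentiableAt_integral_cpow_mul_cexp_neg_mul hs hr).differentiableWithinAt
  have hr' : DifferentiableOn ℂ (fun r : ℂ => r ^ (-s) * Complex.Gamma s) {z | 0 < z.re} :=
    fun r hr => ((differentiableAt_id.cpow_const (Or.inl hr)).mul_const _).differentiableWithinAt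
  refine (hl.analyticOnNhd hopen).eqOn_of_preconnected_of_frequently_eq
    (hr'.analyticOnNhd hopen) (convex_halfSpace_re_gt 0).isPreconnected (z₀ := 1) (by simp) ?_ hr
  have hreal : Tendsto ((↑) : ℝ → ℂ) (𝓝[≠] 1) (𝓝[≠] 1) :=
    tendsto_nhdsWithin_iff.2 ⟨tendsto_nhdsWithin_of_tendsto_nhds
      (Complex.continuous_ofReal.tendsto' _ _ Complex.ofReal_one),
      by filter_upwards [self_mem_nhdsWithin] with x hx using by simpa using hx⟩
  refine hreal.frequently (Eventually.frequently ?_)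
  filter_upwards [nhdsWithin_le_nhds (Ioi_mem_nhds one_pos)] with x (hx : 0 < x)
  rw [Complex.integral_cpow_mul_exp_neg_mul_Ioi hs (by simpa using hx), one_div, Complex.inv_cpow,
    Complex.cpow_neg]
  simpa [Complex.arg_ofReal_of_nonneg hx.le] using pi_pos.ne

end EulerIntegral

section Bose

variable {z : ℂ}

/-- The Bose function `1 / (e^z - 1) = ∑_{n ≥ 1} e^{-nz}`; its Mellin transform is `Γ ζ`. -/
noncomputable def bose (z : ℂ) : ℂ := (Complex.exp z - 1)⁻¹

lemma rexp_re_sub_one_le_norm (z : ℂ) : Real.exp z.re - 1 ≤ ‖Complex.exp z - 1‖ := by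
  simpa [Complex.norm_exp] using norm_sub_norm_le (Complex.exp z) 1

lemma cexp_sub_one_ne_zero (hz : 0 < z.re) : Complex.exp z - 1 ≠ 0 :=
  norm_pos_iff.1 ((sub_pos.2 (Real.one_lt_exp_iff.2 hz)).trans_le (rexp_re_sub_one_le_norm z))

lemma norm_bose_le (hz : 0 < z.re) : ‖bose z‖ ≤ (Real.exp z.re - 1)⁻¹ := by
  rw [bose, norm_inv]
  exact inv_anti₀ (sub_pos.2 (Real.one_lt_exp_iff.2 hz)) (rexp_re_sub_one_le_norm z)

lemma hasSum_cexp_neg_nat_succ_mul (hz : 0 < z.re) :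
    HasSum (fun n : ℕ => Complex.exp (-((n + 1 : ℕ) * z))) (bose z) := by
  have hlt : ‖Complex.exp (-z)‖ < 1 := by simpa [Complex.norm_exp] using hz
  have hbose : bose z = Complex.exp (-z) * (1 - Complex.exp (-z))⁻¹ := by
    rw [bose, Complex.exp_neg]
    have := cexp_sub_one_ne_zero hz
    have := Complex.exp_ne_zero z
    field_simp
  rw [hbose]
  refine ((hasSum_geometric_of_norm_lt_one hlt).mul_left _).congr_fun fun n => ?_
  rw [← Complex.exp_nat_mul, ← Complex.exp_add]
  congr 1
  push_cast
  ring

lemma hasDerivAt_bose (hz : Complex.exp z - 1 ≠ 0) :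
    HasDerivAt bose (-(bose z + bose z ^ 2)) z := by
  refine (((Complex.hasDerivAt_exp z).sub_const 1).inv hz).congr_deriv ?_
  rw [bose]
  field_simp
  ring

lemma bose_mul_bose {w : ℂ} (hz : Complex.exp z - 1 ≠ 0) (hw : Complex.exp w - 1 ≠ 0)
    (hzw : Complex.exp (z + w) - 1 ≠ 0) :
    bose z * bose w = bose (z + w) * (1 + bose z + bose w) := by
  rw [Complex.exp_add] at hzw
  rw [bose, bose, bose, Complex.exp_add]
  field_simp
  ring

/-- The entire function extending `(e^z - 1) / z`. -/
noncomputable def expSlope : ℂ → ℂ := dslope Complex.exp 0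

lemma expSlope_zero : expSlope 0 = 1 := by simp [expSlope]

lemma expSlope_of_ne (hz : z ≠ 0) : expSlope z = (Complex.exp z - 1) / z := by
  simp [expSlope, dslope_of_ne _ hz, slope_def_field]

lemma differentiable_expSlope : Differentiable ℂ expSlope := by
  rw [← differentiableOn_univ]
  exact (Complex.differentiableOn_dslope univ_mem).2 Complex.differentiable_exp.differentiableOn

lemma deriv_expSlope_zero : deriv expSlope 0 = 1 / 2 := by
  have hfactor : Complex.exp = fun z => 1 + z * expSlope z := by
    funext z
    rcases eq_or_ne z 0 with rfl | hz
    · simp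
    · rw [expSlope_of_ne hz]
      field_simp
      ring
  have hd (z : ℂ) : HasDerivAt expSlope (deriv expSlope z) z :=
    (differentiable_expSlope z).hasDerivAt
  have hderiv : Complex.exp = fun z => expSlope z + z * deriv expSlope z := by
    funext z
    have h := ((hasDerivAt_id z).mul (hd z)).const_add 1
    simpa using ((Complex.hasDerivAt_exp z).congr_of_eventuallyEq (.of_eq hfactor.symm)).unique h
  have h := (hd 0).add ((hasDerivAt_id (0 : ℂ)).mul
    (differentiable_expSlope.analyticAt 0).deriv.differentiableAt.hasDerivAt)
  have hexp := (Complex.hasDerivAt_exp 0).congr_of_eventuallyEq (.of_eq hderiv.symm)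
  have := hexp.unique h
  simp only [Complex.exp_zero, one_mul, id_eq, zero_mul, add_zero] at this
  linear_combination -this / 2

lemma expSlope_ne_zero (hz : |z.im| < 2 * π) : expSlope z ≠ 0 := by
  rcases eq_or_ne z 0 with rfl | h0
  · simp [expSlope_zero]
  rw [expSlope_of_ne h0]
  refine div_ne_zero (fun h => ?_) h0
  obtain ⟨n, rfl⟩ := Complex.exp_eq_one_iff.1 (sub_eq_zero.1 h)
  have hn : (1 : ℝ) ≤ |(n : ℝ)| := by
    rw [← Int.cast_abs]
    exact_mod_cast Int.one_le_abs (by rintro rfl; simp at h0)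
  have him : ((n : ℂ) * (2 * π * Complex.I)).im = n * (2 * π) := by simp
  rw [him, abs_mul, abs_of_pos two_pi_pos] at hz
  nlinarith [pi_pos]

/-- The Bose function minus its pole, `1 / (e^z - 1) - 1 / z`, continued analytically to `z = 0`
(where division by zero would give `0` instead of `-1/2`). -/
noncomputable def boseSubPole : ℂ → ℂ := dslope (fun z => (expSlope z)⁻¹) 0

lemma boseSubPole_of_ne (hz : z ≠ 0) : boseSubPole z = bose z - 1 / z := by
  rw [boseSubPole, dslope_of_ne _ hz, slope_def_field, expSlope_zero, expSlope_of_ne hz, bose]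
  simp only [inv_div, inv_one, sub_zero]
  rw [sub_div, div_div, mul_comm _ z, ← div_div, div_self hz, one_div]

lemma boseSubPole_zero : boseSubPole 0 = -1 / 2 := by
  have h : HasDerivAt (fun z => (expSlope z)⁻¹) _ 0 :=
    (differentiable_expSlope 0).hasDerivAt.inv (by simp [expSlope_zero])
  rw [boseSubPole, dslope_same, h.deriv, deriv_expSlope_zero, expSlope_zero]
  norm_num

lemma isOpen_abs_im_lt (r : ℝ) : IsOpen {z : ℂ | |z.im| < r} :=
  isOpen_lt (continuous_abs.comp Complex.continuous_im) continuous_const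

lemma differentiableAt_boseSubPole (hz : |z.im| < 2 * π) : DifferentiableAt ℂ boseSubPole z := by
  have hopen := isOpen_abs_im_lt (2 * π)
  refine ((Complex.differentiableOn_dslope (hopen.mem_nhds (by simp [pi_pos]))).2 fun w hw => ?_)
    |>.differentiableAt (hopen.mem_nhds hz)
  exact ((differentiable_expSlope w).inv (expSlope_ne_zero hw)).differentiableWithinAt

lemma boseSubPole_add_half_isBigO : (fun z => boseSubPole z + 1 / 2) =O[𝓝 0] fun z => z := by
  have h := (differentiableAt_boseSubPole (z := 0) (by simp [pi_pos])).isBigO_sub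
  simpa [boseSubPole_zero, neg_div] using h

end Bose

section HasMellin

variable {E : Type*} [NormedAddCommGroup E] [NormedSpace ℂ E] {f g : ℝ → E} {s : ℂ} {m n : E}

lemma hasMellin_add' (hf : HasMellin f s m) (hg : HasMellin g s n) :
    HasMellin (fun t => f t + g t) s (m + n) :=
  hf.2 ▸ hg.2 ▸ hasMellin_add hf.1 hg.1

lemma hasMellin_sub' (hf : HasMellin f s m) (hg : HasMellin g s n) :
    HasMellin (fun t => f t - g t) s (m - n) :=
  hf.2 ▸ hg.2 ▸ hasMellin_sub hf.1 hg.1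

lemma hasMellin_const_smul' (hf : HasMellin f s m) (c : ℂ) :
    HasMellin (fun t => c • f t) s (c • m) :=
  hf.2 ▸ hasMellin_const_smul hf.1 c

end HasMellin

section Mellin

variable {a s : ℂ}

lemma continuousOn_bose_mul (ha : 0 < a.re) :
    ContinuousOn (fun x : ℝ => bose (a * x)) (Ioi 0) := fun x hx =>
  ((hasDerivAt_bose (cexp_sub_one_ne_zero (re_mul_ofReal_pos ha hx))).continuousAt.comp
    (f := fun x : ℝ => a * (x : ℂ)) (by fun_prop)).continuousWithinAt

lemma bose_mul_isBigO_atTop (ha : 0 < a.re) :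
    (fun x : ℝ => bose (a * x)) =O[atTop] fun x => Real.exp (-a.re * x) := by
  refine Asymptotics.IsBigO.of_bound 2 ?_
  filter_upwards [eventually_ge_atTop (1 / a.re), eventually_gt_atTop 0] with x hx hx0
  have hexp : 2 ≤ Real.exp (a.re * x) := by
    linarith [Real.add_one_le_exp (a.re * x), (div_le_iff₀' ha).1 hx]
  calc ‖bose (a * x)‖ ≤ (Real.exp (a.re * x) - 1)⁻¹ := by
        simpa using norm_bose_le (re_mul_ofReal_pos ha hx0)
    _ ≤ (Real.exp (a.re * x) / 2)⁻¹ := inv_anti₀ (by positivity) (by linarith)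
    _ = 2 * ‖Real.exp (-a.re * x)‖ := by
        rw [Real.norm_of_nonneg (Real.exp_pos _).le, neg_mul, Real.exp_neg, inv_div, div_eq_mul_inv]

/-- `bose (a x)` with its two-term expansion `1 / (a x) - 1 / 2` at `0` removed on `(0, 1]`, so
that the Mellin transform converges for `Re s > -1`. -/
noncomputable def boseReg (a : ℂ) (x : ℝ) : ℂ :=
  bose (a * x) - (Ioc (0 : ℝ) 1).indicator (fun x : ℝ => 1 / (a * x) - 1 / 2) x

lemma boseReg_of_mem_Ioc (ha : 0 < a.re) {x : ℝ} (hx : x ∈ Ioc (0 : ℝ) 1) :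
    boseReg a x = boseSubPole (a * x) + 1 / 2 := by
  rw [boseReg, indicator_of_mem hx,
    boseSubPole_of_ne (ne_zero_of_re_pos (re_mul_ofReal_pos ha hx.1))]
  ring

lemma boseReg_of_one_lt (a : ℂ) {x : ℝ} (hx : 1 < x) : boseReg a x = bose (a * x) := by
  rw [boseReg, indicator_of_notMem fun h => hx.not_ge h.2, sub_zero]

lemma locallyIntegrableOn_boseReg (ha : 0 < a.re) :
    LocallyIntegrableOn (boseReg a) (Ioi 0) := by
  refine ((continuousOn_bose_mul ha).locallyIntegrableOn measurableSet_Ioi).sub ?_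
  have hcont : ContinuousOn (fun x : ℝ => 1 / (a * x) - 1 / 2) (Ioi 0) := by
    intro x hx
    have : a * (x : ℂ) ≠ 0 := ne_zero_of_re_pos (re_mul_ofReal_pos ha hx)
    exact ContinuousAt.continuousWithinAt (by fun_prop (disch := assumption))
  exact (hcont.locallyIntegrableOn measurableSet_Ioi).mono
    (Measurable.indicator (by fun_prop) measurableSet_Ioc).aestronglyMeasurable
    (.of_forall fun _ => norm_indicator_le_norm_self _ _)

lemma boseReg_isBigO_atTop (ha : 0 < a.re) :
    boseReg a =O[atTop] fun x => Real.exp (-a.re * x) := by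
  refine (bose_mul_isBigO_atTop ha).congr' ?_ .rfl
  filter_upwards [eventually_gt_atTop 1] with x hx using (boseReg_of_one_lt a hx).symm

lemma boseReg_isBigO_nhdsGT_zero (ha : 0 < a.re) :
    boseReg a =O[𝓝[>] 0] fun x : ℝ => x ^ (-(-1) : ℝ) := by
  have hlim : Tendsto (fun x : ℝ => a * (x : ℂ)) (𝓝[>] 0) (𝓝 0) :=
    tendsto_nhdsWithin_of_tendsto_nhds (Continuous.tendsto' (by fun_prop) _ _ (by simp))
  have hlin : (fun x : ℝ => a * (x : ℂ)) =O[𝓝[>] 0] fun x : ℝ => x ^ (-(-1) : ℝ) :=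
    .of_bound ‖a‖ (by simp)
  refine ((boseSubPole_add_half_isBigO.comp_tendsto hlim).trans hlin).congr' ?_ .rfl
  filter_upwards [Ioc_mem_nhdsGT zero_lt_one] with x hx using (boseReg_of_mem_Ioc ha hx).symm

lemma mellinConvergent_boseReg (ha : 0 < a.re) (hs : -1 < s.re) :
    MellinConvergent (boseReg a) s :=
  mellinConvergent_of_isBigO_rpow_exp ha (locallyIntegrableOn_boseReg ha)
    (boseReg_isBigO_atTop ha) (boseReg_isBigO_nhdsGT_zero ha) hs

lemma differentiableAt_mellin_boseReg (ha : 0 < a.re) (hs : -1 < s.re) :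
    DifferentiableAt ℂ (mellin (boseReg a)) s :=
  mellin_differentiableAt_of_isBigO_rpow_exp ha (locallyIntegrableOn_boseReg ha)
    (boseReg_isBigO_atTop ha) (boseReg_isBigO_nhdsGT_zero ha) hs

lemma ofReal_mul_cpow {r : ℝ} (hr : 0 < r) (ha : a ≠ 0) (s : ℂ) :
    ((r : ℂ) * a) ^ s = (r : ℂ) ^ s * a ^ s := by
  have hr' : (r : ℂ) ≠ 0 := by exact_mod_cast hr.ne'
  rw [Complex.cpow_def_of_ne_zero (mul_ne_zero hr' ha), Complex.cpow_def_of_ne_zero hr',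
    Complex.cpow_def_of_ne_zero ha, ← Complex.exp_add, Complex.log_ofReal_mul hr ha,
    Complex.ofReal_log hr.le, add_mul]

lemma summable_integral_norm_cpow_mul_cexp (ha : 0 < a.re) (hs : 1 < s.re) :
    Summable fun n : ℕ => ∫ t in Ioi (0 : ℝ),
      ‖(t : ℂ) ^ (s - 1) * Complex.exp (-(((n + 1 : ℕ) : ℝ) * a * t))‖ := by
  have hzeta : Summable fun n : ℕ => 1 / (((n + 1 : ℕ) : ℝ)) ^ s.re :=
    (summable_nat_add_iff 1).2 (Real.summable_one_div_nat_rpow.2 hs)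
  refine (hzeta.mul_left ((1 / a.re) ^ s.re * Real.Gamma s.re)).congr fun n => ?_
  have hn : (0 : ℝ) < (n + 1 : ℕ) := by positivity
  rw [setIntegral_congr_fun measurableSet_Ioi fun t ht => norm_cpow_mul_cexp_neg_mul ht,
    Complex.re_ofReal_mul, Real.integral_rpow_mul_exp_neg_mul_Ioi (by linarith) (by positivity),
    ← one_div_mul_one_div, Real.mul_rpow (by positivity) (by positivity),
    Real.div_rpow zero_le_one hn.le, Real.one_rpow]
  ring

lemma mellin_bose_mul (ha : 0 < a.re) (hs : 1 < s.re) :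
    mellin (fun x : ℝ => bose (a * x)) s = a ^ (-s) * Complex.Gamma s * riemannZeta s := by
  have hs0 : 0 < s.re := by linarith
  have hre (n : ℕ) : 0 < (((n + 1 : ℕ) : ℝ) * a).re := by
    rw [Complex.re_ofReal_mul]
    positivity
  have hsum := hasSum_integral_of_summable_integral_norm
    (fun n => integrableOn_cpow_mul_cexp_neg_mul hs0 (hre n))
    (summable_integral_norm_cpow_mul_cexp ha hs)
  simp_rw [integral_cpow_mul_cexp_neg_mul hs0 (hre _)] at hsum
  calc mellin (fun x : ℝ => bose (a * x)) s
      = ∫ t in Ioi (0 : ℝ), ∑' n : ℕ,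
          (t : ℂ) ^ (s - 1) * Complex.exp (-(((n + 1 : ℕ) : ℝ) * a * t)) := by
        refine setIntegral_congr_fun measurableSet_Ioi fun t ht => ?_
        simp only [smul_eq_mul]
        rw [← ((hasSum_cexp_neg_nat_succ_mul (re_mul_ofReal_pos ha ht)).mul_left _).tsum_eq]
        simp only [Complex.ofReal_natCast, mul_assoc]
    _ = ∑' n : ℕ, (((n + 1 : ℕ) : ℝ) * a) ^ (-s) * Complex.Gamma s := hsum.tsum_eq.symm
    _ = ∑' n : ℕ, a ^ (-s) * Complex.Gamma s * (1 / ((n : ℂ) + 1) ^ s) := by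
        refine tsum_congr fun n => ?_
        rw [ofReal_mul_cpow (by positivity) (ne_zero_of_re_pos ha),
          Complex.cpow_neg ((n + 1 : ℕ) : ℝ)]
        push_cast
        ring
    _ = a ^ (-s) * Complex.Gamma s * riemannZeta s := by
        rw [zeta_eq_tsum_one_div_nat_add_one_cpow hs, tsum_mul_left]

lemma mellin_boseReg_of_one_lt_re (ha : 0 < a.re) (hs : 1 < s.re) :
    mellin (boseReg a) s =
      a ^ (-s) * Complex.Gamma s * riemannZeta s - 1 / (a * (s - 1)) + 1 / (2 * s) := by
  have ha0 : a ≠ 0 := ne_zero_of_re_pos ha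
  have hconst := hasMellin_one_Ioc (s := s) (by linarith)
  have hinv := hasMellin_cpow_Ioc (-1) (s := s) (by simpa using hs)
  have htot := hasMellin_sub' (hasMellin_add' ⟨mellinConvergent_boseReg ha (by linarith), rfl⟩
    (hasMellin_const_smul' hinv (1 / a))) (hasMellin_const_smul' hconst (1 / 2))
  have hbose : mellin (fun x : ℝ => bose (a * x)) s = mellin (fun t : ℝ => boseReg a t +
      (1 / a : ℂ) • (Ioc (0 : ℝ) 1).indicator (fun t : ℝ => (t : ℂ) ^ (-1 : ℂ)) t -
      (1 / 2 : ℂ) • (Ioc (0 : ℝ) 1).indicator (fun _ => (1 : ℂ)) t) s := by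
    refine setIntegral_congr_fun measurableSet_Ioi fun t ht => ?_
    have ht0 : (t : ℂ) ≠ 0 := by exact_mod_cast (ne_of_gt ht)
    by_cases h : t ∈ Ioc (0 : ℝ) 1
    · simp only [boseReg, indicator_of_mem h, Complex.cpow_neg_one, smul_eq_mul]
      field_simp
      ring
    · simp [boseReg, indicator_of_notMem h]
  rw [htot.2, mellin_bose_mul ha hs, smul_eq_mul, smul_eq_mul, ← sub_eq_add_neg] at hbose
  have hs0 : s ≠ 0 := ne_zero_of_re_pos (by linarith)
  have hs1 : s - 1 ≠ 0 := ne_zero_of_re_pos (by simpa using hs)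
  rw [hbose]
  field_simp
  ring

lemma differentiableAt_Gamma_of_re_pos (hs : 0 < s.re) : DifferentiableAt ℂ Complex.Gamma s :=
  Complex.differentiableAt_Gamma s fun m h => by
    rw [h, Complex.neg_re, Complex.natCast_re] at hs
    linarith [m.cast_nonneg (α := ℝ)]

lemma sub_one_mul_mul_mellin_boseReg (ha : 0 < a.re) (hs : -1 < s.re) :
    (s - 1) * (s * mellin (boseReg a) s) =
      a ^ (-s) * Complex.Gamma (s + 1) * riemannZeta₁ s - s / a + (s - 1) / 2 := by
  have hopen : IsOpen {z : ℂ | -1 < z.re} := isOpen_lt continuous_const Complex.continuous_re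
  have hl : DifferentiableOn ℂ (fun s => (s - 1) * (s * mellin (boseReg a) s)) {z | -1 < z.re} :=
    fun s hs => have := differentiableAt_mellin_boseReg ha hs
      DifferentiableAt.differentiableWithinAt (by fun_prop)
  have hr : DifferentiableOn ℂ (fun s => a ^ (-s) * Complex.Gamma (s + 1) * riemannZeta₁ s
      - s / a + (s - 1) / 2) {z | -1 < z.re} := by
    intro s hs
    have hΓ : DifferentiableAt ℂ Complex.Gamma (s + 1) :=
      differentiableAt_Gamma_of_re_pos (by simpa [neg_lt_iff_pos_add] using hs)
    have hpow : DifferentiableAt ℂ (fun s => a ^ (-s)) s :=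
      differentiableAt_id.neg.const_cpow (Or.inl (ne_zero_of_re_pos ha))
    have hζ := differentiable_riemannZeta₁ s
    exact DifferentiableAt.differentiableWithinAt (by fun_prop)
  refine (hl.analyticOnNhd hopen).eqOn_of_preconnected_of_eventuallyEq (hr.analyticOnNhd hopen)
    (convex_halfSpace_re_gt (-1)).isPreconnected (z₀ := 2) ?_ ?_ hs
  · norm_num
  filter_upwards [(isOpen_lt continuous_const Complex.continuous_re).mem_nhds
    (show (1 : ℝ) < (2 : ℂ).re by simp)] with s (hs : 1 < s.re)
  have ha0 : a ≠ 0 := ne_zero_of_re_pos ha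
  have hs0 : s ≠ 0 := ne_zero_of_re_pos (by linarith)
  have hs1 : s - 1 ≠ 0 := ne_zero_of_re_pos (by simpa using hs)
  rw [mellin_boseReg_of_one_lt_re ha hs, riemannZeta_eq_inv_sub_mul (sub_ne_zero.1 hs1),
    Complex.Gamma_add_one _ hs0]
  field_simp

lemma eventually_mellin_boseReg (ha : 0 < a.re) (hs : -1 < s.re) :
    (fun s => (s - 1) * (s * mellin (boseReg a) s)) =ᶠ[𝓝 s] fun s =>
      a ^ (-s) * Complex.Gamma (s + 1) * riemannZeta₁ s - s / a + (s - 1) / 2 := by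
  filter_upwards [(isOpen_lt continuous_const Complex.continuous_re).mem_nhds hs] with s hs
    using sub_one_mul_mul_mellin_boseReg ha hs

lemma eq_of_hasDerivAt_of_sub_mul_eventuallyEq {M R : ℂ → ℂ} {c R' : ℂ} (hM : ContinuousAt M c)
    (hR : HasDerivAt R R' c) (h : (fun s => (s - c) * M s) =ᶠ[𝓝 c] R) : M c = R' := by
  have hderiv : HasDerivAt (fun s => (s - c) * M s) (M c) c := by
    refine hasDerivAt_iff_tendsto_slope.2 ((hM.tendsto.mono_left nhdsWithin_le_nhds).congr' ?_)
    filter_upwards [self_mem_nhdsWithin] with s hs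
    have : s - c ≠ 0 := sub_ne_zero.2 hs
    rw [slope_def_field]
    field_simp
    ring
  exact hderiv.unique (hR.congr_of_eventuallyEq h)

lemma hasDerivAt_cpow_neg (ha : a ≠ 0) :
    HasDerivAt (fun s : ℂ => a ^ (-s)) (-(a ^ (-s) * Complex.log a)) s := by
  simpa using! (hasDerivAt_id s).neg.const_cpow (Or.inl ha)

lemma mellin_boseReg_one (ha : 0 < a.re) :
    mellin (boseReg a) 1 = -Complex.log a / a + 1 / 2 := by
  have ha0 : a ≠ 0 := ne_zero_of_re_pos ha
  have hs : -1 < (1 : ℂ).re := by simp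
  have hΓ : HasDerivAt (fun s : ℂ => Complex.Gamma (s + 1))
      (1 - Real.eulerMascheroniConstant) 1 :=
    HasDerivAt.comp_add_const 1 1
      (by simpa [neg_add_eq_sub] using Complex.hasDerivAt_Gamma_nat 1)
  have hζ : HasDerivAt riemannZeta₁ (Real.eulerMascheroniConstant : ℂ) 1 := by
    rw [← deriv_riemannZeta₁_one]
    exact (differentiable_riemannZeta₁ 1).hasDerivAt
  have hR := ((((hasDerivAt_cpow_neg ha0).mul hΓ).mul hζ).sub
    ((hasDerivAt_id (1 : ℂ)).div_const a)).add (((hasDerivAt_id (1 : ℂ)).sub_const 1).div_const 2)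
  have h := eq_of_hasDerivAt_of_sub_mul_eventuallyEq (continuousAt_id.mul
    (differentiableAt_mellin_boseReg ha hs).continuousAt) hR (eventually_mellin_boseReg ha hs)
  have hΓ2 : Complex.Gamma (1 + 1) = 1 := by
    rw [Complex.Gamma_add_one _ one_ne_zero, Complex.Gamma_one, one_mul]
  simp only [Pi.mul_apply, id_eq, one_mul, Complex.cpow_neg_one, hΓ2, mul_one,
    riemannZeta₁_one] at h
  rw [h]
  field_simp
  ring

lemma riemannZeta₁_zero : riemannZeta₁ 0 = 1 / 2 := by
  have h := riemannZeta_eq_inv_sub_mul (zero_ne_one (α := ℂ))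
  simp only [riemannZeta_zero, zero_sub, inv_neg, inv_one, neg_mul, one_mul] at h
  linear_combination h

lemma hasDerivAt_riemannZeta₁_zero :
    HasDerivAt riemannZeta₁ (riemannZeta 0 - deriv riemannZeta 0) 0 := by
  have h := ((hasDerivAt_id (0 : ℂ)).sub_const 1).mul
    (differentiableAt_riemannZeta zero_ne_one).hasDerivAt
  refine (h.congr_deriv ?_).congr_of_eventuallyEq ?_
  · simp only [one_mul, id_eq, zero_sub, neg_mul]
    ring
  filter_upwards [isOpen_ne.mem_nhds (zero_ne_one (α := ℂ))] with s hs
  have : s - 1 ≠ 0 := sub_ne_zero.2 hs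
  simp only [id_eq, Pi.mul_apply, riemannZeta_eq_inv_sub_mul hs]
  field_simp

lemma mellin_boseReg_zero (ha : 0 < a.re) :
    mellin (boseReg a) 0 = Complex.log a / 2 + Real.eulerMascheroniConstant / 2 -
      Complex.log (2 * π) / 2 + 1 / a := by
  have ha0 : a ≠ 0 := ne_zero_of_re_pos ha
  have hs : -1 < (0 : ℂ).re := by simp
  have hΓ : HasDerivAt (fun s : ℂ => Complex.Gamma (s + 1))
      (-(Real.eulerMascheroniConstant : ℂ)) 0 :=
    HasDerivAt.comp_add_const 0 1 (by simpa using Complex.hasDerivAt_Gamma_one)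
  have hR := ((((hasDerivAt_cpow_neg ha0).mul hΓ).mul hasDerivAt_riemannZeta₁_zero).sub
    ((hasDerivAt_id (0 : ℂ)).div_const a)).add (((hasDerivAt_id (0 : ℂ)).sub_const 1).div_const 2)
  have h := eq_of_hasDerivAt_of_sub_mul_eventuallyEq
    (M := fun s => (s - 1) * mellin (boseReg a) s)
    ((continuousAt_id.sub_const 1).mul (differentiableAt_mellin_boseReg ha hs).continuousAt) hR
    (by filter_upwards [eventually_mellin_boseReg ha hs] with s h
        rw [sub_zero, mul_left_comm]
        exact h)
  simp only [zero_sub, neg_mul, one_mul, neg_zero, Complex.cpow_zero, zero_add,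
    Complex.Gamma_one, mul_one, mul_neg, riemannZeta₁_zero, Pi.mul_apply, riemannZeta_zero,
    deriv_riemannZeta_zero] at h
  rw [neg_eq_iff_eq_neg] at h
  rw [h]
  field_simp
  ring

end Mellin

section Strip

variable {a s : ℂ}

lemma hasMellin_cpow_Ioi (w : ℂ) {s : ℂ} (hs : s.re + w.re < 0) :
    HasMellin ((Ioi (1 : ℝ)).indicator fun t : ℝ => (t : ℂ) ^ w) s (-1 / (s + w)) := by
  have hre : (s - 1 + w).re < -1 := by
    simp only [Complex.add_re, Complex.sub_re, Complex.one_re]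
    linarith
  have hsub : Ioi (1 : ℝ) ⊆ Ioi 0 := Ioi_subset_Ioi zero_le_one
  have hmul : EqOn (fun t : ℝ => (t : ℂ) ^ (s - 1 + w))
      (fun t : ℝ => (t : ℂ) ^ (s - 1) • (t : ℂ) ^ w) (Ioi 1) := fun t ht => by
    have : (t : ℂ) ≠ 0 := by exact_mod_cast (zero_lt_one.trans ht).ne'
    simp only [smul_eq_mul, Complex.cpow_add _ _ this]
  constructor
  · simp_rw [MellinConvergent, ← indicator_smul]
    rw [IntegrableOn, integrable_indicator_iff measurableSet_Ioi, IntegrableOn,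
      Measure.restrict_restrict_of_subset hsub]
    exact (integrableOn_Ioi_cpow_of_lt hre one_pos).congr_fun hmul measurableSet_Ioi
  · simp_rw [mellin, ← indicator_smul]
    rw [integral_indicator measurableSet_Ioi, Measure.restrict_restrict_of_subset hsub,
      ← setIntegral_congr_fun measurableSet_Ioi hmul, integral_Ioi_cpow_of_lt hre one_pos,
      Complex.ofReal_one, Complex.one_cpow]
    ring_nf

lemma continuousOn_boseSubPole_mul (ha : 0 < a.re) :
    ContinuousOn (fun x : ℝ => boseSubPole (a * x)) (Ioi 0) := by
  have hinv : ContinuousOn (fun x : ℝ => 1 / (a * (x : ℂ))) (Ioi 0) :=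
    continuousOn_const.div (by fun_prop) fun x hx => ne_zero_of_re_pos (re_mul_ofReal_pos ha hx)
  exact ((continuousOn_bose_mul ha).sub hinv).congr fun x hx =>
    boseSubPole_of_ne (ne_zero_of_re_pos (re_mul_ofReal_pos ha hx))

lemma boseSubPole_mul_eq_boseReg (ha : 0 < a.re) {x : ℝ} (hx : 0 < x) :
    boseSubPole (a * x) = boseReg a x - (1 / 2 : ℂ) • (Ioc (0 : ℝ) 1).indicator (fun _ => (1 : ℂ)) x
      - (1 / a : ℂ) • (Ioi (1 : ℝ)).indicator (fun t : ℝ => (t : ℂ) ^ (-1 : ℂ)) x := by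
  rcases le_or_gt x 1 with h1 | h1
  · have hmem : x ∈ Ioc (0 : ℝ) 1 := ⟨hx, h1⟩
    rw [boseReg_of_mem_Ioc ha hmem, indicator_of_mem hmem, indicator_of_notMem (by simpa using h1)]
    simp
  · rw [boseReg_of_one_lt a h1, indicator_of_notMem fun h => h1.not_ge h.2,
      indicator_of_mem (mem_Ioi.2 h1),
      boseSubPole_of_ne (ne_zero_of_re_pos (re_mul_ofReal_pos ha hx)), Complex.cpow_neg_one]
    simp [mul_comm]

/-- Moving across the pole of `ζ` at `1` turns the Bose function into `boseSubPole`. -/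
lemma hasMellin_boseSubPole_mul (ha : 0 < a.re) (hs0 : 0 < s.re) (hs1 : s.re < 1) :
    HasMellin (fun x : ℝ => boseSubPole (a * x)) s
      (a ^ (-s) * (Complex.Gamma s * riemannZeta s)) := by
  have hconst := hasMellin_one_Ioc hs0
  have hinv := hasMellin_cpow_Ioi (-1) (s := s) (by simpa using hs1)
  have htot := hasMellin_sub' (hasMellin_sub' ⟨mellinConvergent_boseReg ha (by linarith), rfl⟩
    (hasMellin_const_smul' hconst (1 / 2))) (hasMellin_const_smul' hinv (1 / a))
  have hcongr : EqOn (fun t : ℝ => (t : ℂ) ^ (s - 1) • boseSubPole (a * t)) _ (Ioi 0) :=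
    fun t ht => congrArg ((t : ℂ) ^ (s - 1) • ·) (boseSubPole_mul_eq_boseReg ha ht)
  refine ⟨htot.1.congr_fun hcongr.symm measurableSet_Ioi,
    (setIntegral_congr_fun measurableSet_Ioi hcongr).trans (htot.2.trans ?_)⟩
  have ha0 : a ≠ 0 := ne_zero_of_re_pos ha
  have hs0' : s ≠ 0 := ne_zero_of_re_pos hs0
  have hs1' : s - 1 ≠ 0 := fun h => by simp [sub_eq_zero.1 h] at hs1
  have hkey := sub_one_mul_mul_mellin_boseReg ha (s := s) (by linarith)
  rw [Complex.Gamma_add_one _ hs0'] at hkey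
  have hmellin : mellin (boseReg a) s = _ / ((s - 1) * s) :=
    eq_div_of_mul_eq (mul_ne_zero hs1' hs0') ((by ring : _ = _).trans hkey)
  rw [hmellin, smul_eq_mul, smul_eq_mul,
    ← sub_eq_add_neg, riemannZeta_eq_inv_sub_mul (sub_ne_zero.1 hs1')]
  field_simp
  ring

end Strip

section MellinPlancherel

variable {E : Type*} [NormedAddCommGroup E] [NormedSpace ℝ E]

lemma image_exp_neg_univ : (fun u : ℝ => rexp (-u)) '' univ = Ioi 0 := by
  rw [image_univ]
  exact neg_surjective.range_comp rexp |>.trans Real.range_exp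

lemma hasDerivAt_exp_neg (u : ℝ) : HasDerivAt (fun u : ℝ => rexp (-u)) (-rexp (-u)) u := by
  simpa using (hasDerivAt_neg u).exp

lemma injOn_exp_neg : InjOn (fun u : ℝ => rexp (-u)) univ :=
  (Real.exp_injective.comp neg_injective).injOn

lemma integral_Ioi_eq_integral_exp_neg (f : ℝ → E) :
    ∫ x in Ioi (0 : ℝ), f x = ∫ u : ℝ, rexp (-u) • f (rexp (-u)) := by
  rw [← image_exp_neg_univ, integral_image_eq_integral_abs_deriv_smul MeasurableSet.univ
    (fun u _ => (hasDerivAt_exp_neg u).hasDerivWithinAt) injOn_exp_neg]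
  simp

lemma integrableOn_Ioi_iff_integrable_exp_neg (f : ℝ → E) :
    IntegrableOn f (Ioi 0) ↔ Integrable fun u : ℝ => rexp (-u) • f (rexp (-u)) := by
  rw [← image_exp_neg_univ, integrableOn_image_iff_integrableOn_abs_deriv_smul MeasurableSet.univ
    (fun u _ => (hasDerivAt_exp_neg u).hasDerivWithinAt) injOn_exp_neg]
  simp

lemma integral_norm_fourier_sq {g : ℝ → ℂ} (hc : Continuous g) (hg : Integrable g)
    (hFg : Integrable (𝓕 g)) : ∫ ξ, ‖𝓕 g ξ‖ ^ 2 = ∫ x, ‖g x‖ ^ 2 := by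
  have hinv (x : ℝ) : VectorFourier.fourierIntegral 𝐞 volume (-(innerₗ ℝ).flip) (𝓕 g) x =
      𝓕⁻ (𝓕 g) x := by
    simp [Real.fourierInv_eq, VectorFourier.fourierIntegral]
  have h : ∫ ξ, (innerSL ℂ) (𝓕 g ξ) (𝓕 g ξ) = ∫ x, (innerSL ℂ) (g x) (𝓕⁻ (𝓕 g) x) := by
    simpa only [hinv] using! VectorFourier.integral_sesq_fourierIntegral_eq_neg_flip
      (innerSL ℂ) (L := innerₗ ℝ) continuous_fourierChar continuous_inner hg hFg
  rw [hc.fourierInv_fourier_eq hg hFg] at h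
  apply Complex.ofRealLI.injective
  simpa [← LinearIsometry.integral_comp_comm, inner_self_eq_norm_sq_to_K] using h

lemma integral_norm_mellin_sq {f : ℝ → ℂ} {σ : ℝ} (hf : ContinuousOn f (Ioi 0))
    (hσ : MellinConvergent f σ) (hint : Integrable fun t : ℝ => mellin f (σ + t * Complex.I)) :
    ∫ t : ℝ, ‖mellin f (σ + t * Complex.I)‖ ^ 2 =
      2 * π * ∫ x in Ioi (0 : ℝ), x ^ (2 * σ - 1) * ‖f x‖ ^ 2 := by
  set g : ℝ → ℂ := fun u => rexp (-σ * u) • f (rexp (-u))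
  have hFg : 𝓕 g = fun ξ : ℝ => mellin f (σ + (2 * π * ξ : ℝ) * Complex.I) := by
    funext ξ
    rw [mellin_eq_fourier]
    simp [g, pi_ne_zero]
  have hgc : Continuous g :=
    Continuous.smul (f := fun u => rexp (-σ * u)) (by fun_prop)
      (hf.comp_continuous (by fun_prop) fun u => exp_pos _)
  have hgi : Integrable g := by
    refine ((integrableOn_Ioi_iff_integrable_exp_neg _).1 hσ).congr (.of_forall fun u => ?_)
    simp only [g, Complex.real_smul, smul_eq_mul, ← mul_assoc]
    rw [← Complex.ofReal_one, ← Complex.ofReal_sub, ← Complex.ofReal_cpow (exp_pos _).le,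
      ← Complex.ofReal_mul, ← Real.exp_mul, ← Real.exp_add]
    ring_nf
  have hFgi : Integrable (𝓕 g) := hFg ▸ hint.comp_mul_left' two_pi_pos.ne'
  have hplancherel := integral_norm_fourier_sq hgc hgi hFgi
  rw [hFg, Measure.integral_comp_mul_left (fun t => ‖mellin f (σ + (t : ℝ) * Complex.I)‖ ^ 2),
    abs_of_pos (inv_pos.2 two_pi_pos), smul_eq_mul, inv_mul_eq_iff_eq_mul₀ two_pi_pos.ne']
    at hplancherel
  rw [hplancherel, integral_Ioi_eq_integral_exp_neg]
  congr 2 with u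
  rw [norm_smul, mul_pow, Real.norm_of_nonneg (exp_pos _).le, ← Real.exp_nat_mul, smul_eq_mul,
    ← Real.exp_mul, ← mul_assoc (rexp _) (rexp _), ← Real.exp_add]
  congr 2
  push_cast
  ring

lemma norm_mellin_le (f : ℝ → ℂ) (s : ℂ) :
    ‖mellin f s‖ ≤ ∫ x in Ioi (0 : ℝ), x ^ (s.re - 1) * ‖f x‖ := by
  refine (norm_integral_le_integral_norm _).trans_eq
    (setIntegral_congr_fun measurableSet_Ioi fun x hx => ?_)
  simp [Complex.norm_cpow_eq_rpow_re_of_pos hx]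

end MellinPlancherel

section CriticalLine

variable {a : ℂ}

/-- The point `1/2 + it`. -/
noncomputable def criticalLine (t : ℝ) : ℂ := 1 / 2 + t * Complex.I

@[simp] lemma criticalLine_re (t : ℝ) : (criticalLine t).re = 1 / 2 := by simp [criticalLine]

@[simp] lemma criticalLine_im (t : ℝ) : (criticalLine t).im = t := by simp [criticalLine]

lemma criticalLine_neg (t : ℝ) : criticalLine (-t) = conj (criticalLine t) := by
  apply Complex.ext <;> simp

lemma continuous_criticalLine : Continuous criticalLine := by
  unfold criticalLine
  fun_prop

lemma continuous_Gamma_criticalLine : Continuous fun t => Complex.Gamma (criticalLine t) :=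
  continuous_iff_continuousAt.2 fun t => ContinuousAt.comp (f := criticalLine)
    (differentiableAt_Gamma_of_re_pos (by simp)).continuousAt continuous_criticalLine.continuousAt

lemma continuous_riemannZeta_criticalLine : Continuous fun t => riemannZeta (criticalLine t) :=
  continuous_iff_continuousAt.2 fun t => ContinuousAt.comp (f := criticalLine)
    (differentiableAt_riemannZeta fun h => by simpa using congrArg Complex.re h).continuousAt
    continuous_criticalLine.continuousAt

lemma Z2_eq (t : ℝ) : Z2 t = ‖riemannZeta (criticalLine t)‖ ^ 2 := rfl

lemma Z2_nonneg (t : ℝ) : 0 ≤ Z2 t := sq_nonneg _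

lemma continuous_Z2 : Continuous Z2 := continuous_riemannZeta_criticalLine.norm.pow 2

lemma Z2_neg (t : ℝ) : Z2 (-t) = Z2 t := by
  rw [Z2_eq, Z2_eq, criticalLine_neg, riemannZeta_conj, RCLike.norm_conj]

lemma norm_Gamma_criticalLine_sq (t : ℝ) :
    ‖Complex.Gamma (criticalLine t)‖ ^ 2 = π / cosh (π * t) := by
  have hconj : 1 - criticalLine t = conj (criticalLine t) := by
    apply Complex.ext <;> simp; norm_num
  have hsin : Complex.sin (π * criticalLine t) = (cosh (π * t) : ℝ) := by
    rw [criticalLine, mul_add, mul_one_div, add_comm, Complex.sin_add_pi_div_two, ← mul_assoc,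
      Complex.cos_mul_I]
    push_cast
    rfl
  have hreflection := Complex.Gamma_mul_Gamma_one_sub (criticalLine t)
  rw [hconj, Complex.Gamma_conj, Complex.mul_conj, Complex.normSq_eq_norm_sq, hsin] at hreflection
  exact_mod_cast hreflection

lemma norm_cpow_neg_criticalLine (ha : ‖a‖ = 1) (t : ℝ) :
    ‖a ^ (-criticalLine t)‖ = rexp (a.arg * t) := by
  rw [Complex.norm_cpow_of_ne_zero (norm_ne_zero_iff.1 (ha ▸ one_ne_zero)), ha, one_rpow,
    one_div, ← Real.exp_neg]
  simp

lemma mellin_boseSubPole_mul_criticalLine (ha : 0 < a.re) (t : ℝ) :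
    mellin (fun x : ℝ => boseSubPole (a * x)) (criticalLine t) =
      a ^ (-criticalLine t) *
        (Complex.Gamma (criticalLine t) * riemannZeta (criticalLine t)) :=
  (hasMellin_boseSubPole_mul ha (by simp) (by norm_num)).2

lemma norm_mellin_boseSubPole_mul_sq (ha : 0 < a.re) (hna : ‖a‖ = 1) (t : ℝ) :
    ‖mellin (fun x : ℝ => boseSubPole (a * x)) (criticalLine t)‖ ^ 2 =
      π * (rexp (2 * a.arg * t) * (Z2 t / cosh (π * t))) := by
  rw [mellin_boseSubPole_mul_criticalLine ha, norm_mul, norm_mul, mul_pow, mul_pow,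
    norm_cpow_neg_criticalLine hna, norm_Gamma_criticalLine_sq, ← Z2_eq, ← Real.exp_nat_mul]
  push_cast
  ring_nf

lemma exp_mul_I_re_pos {θ : ℝ} (hθ : θ ∈ Ioo (-(π / 2)) (π / 2)) :
    0 < (Complex.exp (θ * Complex.I)).re := by
  rw [Complex.exp_ofReal_mul_I_re]
  exact cos_pos_of_mem_Ioo hθ

lemma arg_exp_mul_I_of_mem_Ioo {θ : ℝ} (hθ : θ ∈ Ioo (-(π / 2)) (π / 2)) :
    (Complex.exp (θ * Complex.I)).arg = θ := by
  rw [Complex.arg_exp_mul_I, toIocMod_eq_self]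
  constructor <;> linarith [hθ.1, hθ.2, pi_pos]

lemma exists_exp_mul_norm_Gamma_mul_riemannZeta_le {θ : ℝ} (hθ : θ ∈ Ioo (-(π / 2)) (π / 2)) :
    ∃ C, ∀ t, rexp (θ * t) *
      ‖Complex.Gamma (criticalLine t) * riemannZeta (criticalLine t)‖ ≤ C := by
  set a := Complex.exp (θ * Complex.I)
  refine ⟨∫ x in Ioi (0 : ℝ), x ^ (1 / 2 - 1 : ℝ) * ‖boseSubPole (a * x)‖, fun t => ?_⟩
  rw [← arg_exp_mul_I_of_mem_Ioo hθ,
    ← norm_cpow_neg_criticalLine (Complex.norm_exp_ofReal_mul_I θ), ← norm_mul,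
    ← mellin_boseSubPole_mul_criticalLine (exp_mul_I_re_pos hθ), ← criticalLine_re t]
  exact norm_mellin_le _ _

lemma exists_norm_Gamma_mul_riemannZeta_le {η : ℝ} (hη : |η| < π / 2) :
    ∃ C, ∀ t, ‖Complex.Gamma (criticalLine t) * riemannZeta (criticalLine t)‖ ≤
      C * rexp (-η * |t|) := by
  rw [abs_lt] at hη
  obtain ⟨C₁, hC₁⟩ := exists_exp_mul_norm_Gamma_mul_riemannZeta_le hη
  obtain ⟨C₂, hC₂⟩ := exists_exp_mul_norm_Gamma_mul_riemannZeta_le (θ := -η)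
    ⟨neg_lt_neg hη.2, by linarith [hη.1]⟩
  refine ⟨max C₁ C₂, fun t => ?_⟩
  rw [neg_mul, Real.exp_neg, ← div_eq_mul_inv, le_div_iff₀' (exp_pos _)]
  rcases le_total 0 t with ht | ht
  · rw [abs_of_nonneg ht]
    exact (hC₁ t).trans (le_max_left _ _)
  · rw [abs_of_nonpos ht, mul_neg, ← neg_mul]
    exact (hC₂ t).trans (le_max_right _ _)

lemma integrable_exp_neg_mul_abs {c : ℝ} (hc : 0 < c) :
    Integrable fun t : ℝ => rexp (-c * |t|) := by
  rw [← integrableOn_univ, ← Iic_union_Ioi (a := (0 : ℝ))]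
  refine IntegrableOn.union ?_ ?_
  · exact (integrableOn_exp_mul_Iic hc 0).congr_fun
      (fun t ht => by simp only [abs_of_nonpos (mem_Iic.1 ht), neg_mul_neg]) measurableSet_Iic
  · exact (integrableOn_exp_mul_Ioi (neg_lt_zero.2 hc) 0).congr_fun
      (fun t ht => by simp only [abs_of_pos (mem_Ioi.1 ht)]) measurableSet_Ioi

lemma continuous_mellin_boseSubPole_mul (ha : 0 < a.re) :
    Continuous fun t => mellin (fun x : ℝ => boseSubPole (a * x)) (criticalLine t) := by
  simp_rw [mellin_boseSubPole_mul_criticalLine ha]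
  exact (continuous_criticalLine.neg.const_cpow (.inl (ne_zero_of_re_pos ha))).mul
    (continuous_Gamma_criticalLine.mul continuous_riemannZeta_criticalLine)

lemma exists_norm_mellin_boseSubPole_mul_le (ha : 0 < a.re) (hna : ‖a‖ = 1) :
    ∃ C c : ℝ, 0 < c ∧ ∀ t,
      ‖mellin (fun x : ℝ => boseSubPole (a * x)) (criticalLine t)‖ ≤ C * rexp (-c * |t|) := by
  have harg : |a.arg| < π / 2 := Complex.abs_arg_lt_pi_div_two_iff.2 (.inl ha)
  set η := (|a.arg| + π / 2) / 2 with hη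
  obtain ⟨C, hC⟩ := exists_norm_Gamma_mul_riemannZeta_le (η := η)
    (by rw [abs_of_nonneg (by positivity)]; linarith)
  refine ⟨C, η - |a.arg|, by linarith, fun t => ?_⟩
  have hexp : a.arg * t ≤ |a.arg| * |t| := (le_abs_self _).trans_eq (abs_mul _ _)
  rw [mellin_boseSubPole_mul_criticalLine ha, norm_mul, norm_cpow_neg_criticalLine hna]
  calc _ ≤ rexp (|a.arg| * |t|) * (C * rexp (-η * |t|)) := by gcongr; exact hC t
    _ = C * rexp (-(η - |a.arg|) * |t|) := by
      rw [mul_left_comm, ← Real.exp_add]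
      ring_nf

lemma integrable_mellin_boseSubPole_mul (ha : 0 < a.re) (hna : ‖a‖ = 1) :
    Integrable fun t => mellin (fun x : ℝ => boseSubPole (a * x)) (criticalLine t) := by
  obtain ⟨C, c, hc, hle⟩ := exists_norm_mellin_boseSubPole_mul_le ha hna
  exact ((integrable_exp_neg_mul_abs hc).const_mul C).mono'
    (continuous_mellin_boseSubPole_mul ha).aestronglyMeasurable (.of_forall hle)

lemma integrable_exp_mul_Z2_div_cosh (ha : 0 < a.re) (hna : ‖a‖ = 1) :
    Integrable fun t => rexp (2 * a.arg * t) * (Z2 t / cosh (π * t)) := by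
  set M := fun t => mellin (fun x : ℝ => boseSubPole (a * x)) (criticalLine t)
  have hM : Integrable M := integrable_mellin_boseSubPole_mul ha hna
  have hbdd (t : ℝ) :
      ‖‖M t‖‖ ≤ ∫ x in Ioi (0 : ℝ), x ^ (1 / 2 - 1 : ℝ) * ‖boseSubPole (a * x)‖ := by
    rw [norm_norm, ← criticalLine_re t]
    exact norm_mellin_le _ _
  have hsq : Integrable fun t => ‖M t‖ ^ 2 := by
    simpa only [sq] using hM.norm.bdd_mul hM.aestronglyMeasurable.norm (.of_forall hbdd)
  simp_rw [M, norm_mellin_boseSubPole_mul_sq ha hna] at hsq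
  exact (integrable_const_mul_iff (isUnit_iff_ne_zero.2 pi_ne_zero) _).1 hsq

lemma integral_exp_mul_Z2_div_cosh (ha : 0 < a.re) (hna : ‖a‖ = 1) :
    ∫ t, rexp (2 * a.arg * t) * (Z2 t / cosh (π * t)) =
      2 * ∫ x in Ioi (0 : ℝ), ‖boseSubPole (a * x)‖ ^ 2 := by
  have hline (t : ℝ) : ((1 / 2 : ℝ) : ℂ) + t * Complex.I = criticalLine t := by
    simp [criticalLine]
  have hconv : MellinConvergent (fun x : ℝ => boseSubPole (a * x)) ((1 / 2 : ℝ) : ℂ) :=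
    (hasMellin_boseSubPole_mul ha (by rw [Complex.ofReal_re]; norm_num)
      (by rw [Complex.ofReal_re]; norm_num)).1
  have hplancherel := integral_norm_mellin_sq (continuousOn_boseSubPole_mul ha) hconv
    (by simpa only [hline] using integrable_mellin_boseSubPole_mul ha hna)
  simp_rw [hline, norm_mellin_boseSubPole_mul_sq ha hna, integral_const_mul] at hplancherel
  rw [mul_comm 2 π, mul_assoc] at hplancherel
  simpa using mul_left_cancel₀ pi_ne_zero hplancherel

lemma integral_Ioi_add_comp_neg {E : Type*} [NormedAddCommGroup E] [NormedSpace ℝ E] {f : ℝ → E}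
    (hf : Integrable f) : ∫ t in Ioi (0 : ℝ), (f t + f (-t)) = ∫ t, f t := by
  rw [integral_add hf.integrableOn hf.comp_neg.integrableOn, integral_comp_neg_Ioi, neg_zero,
    add_comm, intervalIntegral.integral_Iic_add_Ioi hf.integrableOn hf.integrableOn]

lemma exp_add_exp_neg_mul_Z2_div_cosh (θ t : ℝ) :
    rexp (2 * θ * t) * (Z2 t / cosh (π * t)) + rexp (2 * θ * -t) * (Z2 (-t) / cosh (π * -t)) =
      2 * (Z2 t * (cosh (2 * θ * t) / cosh (π * t))) := by
  rw [Z2_neg, mul_neg, mul_neg, cosh_neg, Real.cosh_eq (2 * θ * t)]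
  ring

lemma integrableOn_Z2_mul_cosh_div_cosh (ha : 0 < a.re) (hna : ‖a‖ = 1) :
    IntegrableOn (fun t => Z2 t * (cosh (2 * a.arg * t) / cosh (π * t))) (Ioi 0) := by
  have h := integrable_exp_mul_Z2_div_cosh ha hna
  have hsum := (h.add h.comp_neg).integrableOn (s := Ioi 0)
  simp_rw [Pi.add_def, exp_add_exp_neg_mul_Z2_div_cosh] at hsum
  exact (integrable_const_mul_iff (isUnit_iff_ne_zero.2 two_ne_zero) _).1 hsum

lemma integral_Z2_mul_cosh_div_cosh (ha : 0 < a.re) (hna : ‖a‖ = 1) :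
    ∫ t in Ioi (0 : ℝ), Z2 t * (cosh (2 * a.arg * t) / cosh (π * t)) =
      ∫ x in Ioi (0 : ℝ), ‖boseSubPole (a * x)‖ ^ 2 := by
  have h := integral_Ioi_add_comp_neg (integrable_exp_mul_Z2_div_cosh ha hna)
  simp_rw [exp_add_exp_neg_mul_Z2_div_cosh] at h
  rw [integral_const_mul, integral_exp_mul_Z2_div_cosh ha hna] at h
  exact mul_left_cancel₀ two_ne_zero h

end CriticalLine

section LaplaceTransformZ2

variable {a : ℂ} {c : ℝ}

lemma sinh_le_mul_cosh {x : ℝ} (hx : 0 ≤ x) : sinh x ≤ x * cosh x := by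
  have hmono : MonotoneOn (fun y => y * cosh y - sinh y) (Ici 0) := by
    refine monotoneOn_of_hasDerivWithinAt_nonneg (f' := fun y => y * sinh y) (convex_Ici 0)
      (by fun_prop) (fun y _ => ?_) fun y hy => ?_
    · convert! (((hasDerivAt_id y).mul (hasDerivAt_cosh y)).sub
        (hasDerivAt_sinh y)).hasDerivWithinAt using 1
      simp
    · rw [interior_Ici] at hy
      exact mul_nonneg hy.le (sinh_nonneg_iff.2 hy.le)
  simpa using hmono self_mem_Ici hx hx

lemma cosh_pi_sub_mul_div_cosh (c t : ℝ) :
    cosh ((π - c) * t) / cosh (π * t) =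
      rexp (-c * t) + rexp (-(π * t)) * sinh (c * t) / cosh (π * t) := by
  have hne : cosh (π * t) ≠ 0 := (cosh_pos _).ne'
  rw [sub_mul, cosh_sub, ← cosh_sub_sinh (π * t), neg_mul, ← cosh_sub_sinh (c * t)]
  field_simp
  ring

lemma exp_neg_mul_le_cosh_div_cosh (hc : 0 ≤ c) {t : ℝ} (ht : 0 ≤ t) :
    rexp (-c * t) ≤ cosh ((π - c) * t) / cosh (π * t) := by
  rw [cosh_pi_sub_mul_div_cosh, le_add_iff_nonneg_right]
  exact div_nonneg (mul_nonneg (exp_pos _).le (sinh_nonneg_iff.2 (mul_nonneg hc ht)))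
    (cosh_pos _).le

lemma cosh_div_cosh_sub_exp_neg_le (hc : c ∈ Icc 0 π) {t : ℝ} (ht : 0 ≤ t) :
    cosh ((π - c) * t) / cosh (π * t) - rexp (-c * t) ≤ c * rexp (-1 * t) := by
  have hct : 0 ≤ c * t := mul_nonneg hc.1 ht
  have hcosh : cosh (c * t) ≤ cosh (π * t) := by
    rw [cosh_le_cosh, abs_of_nonneg hct, abs_of_nonneg (by positivity)]
    exact mul_le_mul_of_nonneg_right hc.2 ht
  have hexp : rexp (-(π * t)) ≤ rexp (-(2 * t)) :=
    Real.exp_le_exp.2 (by nlinarith [pi_gt_three])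
  rw [cosh_pi_sub_mul_div_cosh, add_sub_cancel_left, div_le_iff₀ (cosh_pos _)]
  calc rexp (-(π * t)) * sinh (c * t) ≤ rexp (-(2 * t)) * (c * t * cosh (π * t)) := by
        gcongr
        exact (sinh_le_mul_cosh hct).trans (by gcongr)
    _ ≤ rexp (-(2 * t)) * (c * rexp t * cosh (π * t)) := by
        have hle := (le_add_of_nonneg_right zero_le_one).trans (add_one_le_exp t)
        gcongr
        exact hc.1
    _ = c * rexp (-1 * t) * cosh (π * t) := by
        rw [show -1 * t = -(2 * t) + t by ring, Real.exp_add]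
        ring

lemma integrableOn_Z2_mul_exp_neg (hc : 0 < c) :
    IntegrableOn (fun t => Z2 t * rexp (-c * t)) (Ioi 0) := by
  set d := min c π
  have hd : 0 < d := lt_min hc pi_pos
  have hdπ : d ≤ π := min_le_right _ _
  have hθ : (π - d) / 2 ∈ Ioo (-(π / 2)) (π / 2) := ⟨by linarith, by linarith⟩
  refine (integrableOn_Z2_mul_cosh_div_cosh (exp_mul_I_re_pos hθ)
    (Complex.norm_exp_ofReal_mul_I _)).mono' (continuous_Z2.mul (by fun_prop)).aestronglyMeasurable
    ((ae_restrict_mem measurableSet_Ioi).mono fun t ht => ?_)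
  rw [Real.norm_of_nonneg (mul_nonneg (Z2_nonneg t) (exp_pos _).le),
    arg_exp_mul_I_of_mem_Ioo hθ, mul_div_cancel₀ _ two_ne_zero]
  refine mul_le_mul_of_nonneg_left (le_trans ?_ (exp_neg_mul_le_cosh_div_cosh hd.le ht.le))
    (Z2_nonneg t)
  exact Real.exp_le_exp.2 (mul_le_mul_of_nonneg_right (neg_le_neg (min_le_left _ _)) ht.le)

/-- The Laplace transform `c ↦ ∫₀^∞ Z(t)² e^{-ct} dt`. -/
noncomputable def Z2Laplace (c : ℝ) : ℝ := ∫ t in Ioi (0 : ℝ), Z2 t * rexp (-c * t)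

lemma Z2Laplace_nonneg (c : ℝ) : 0 ≤ Z2Laplace c :=
  integral_nonneg fun t => mul_nonneg (Z2_nonneg t) (exp_pos _).le

lemma abs_integral_norm_boseSubPole_sq_sub_le (ha : 0 < a.re) (hna : ‖a‖ = 1) (harg : 0 ≤ a.arg) :
    |(∫ x in Ioi (0 : ℝ), ‖boseSubPole (a * x)‖ ^ 2) - Z2Laplace (π - 2 * a.arg)| ≤
      (π - 2 * a.arg) * Z2Laplace 1 := by
  have harg' := (abs_lt.1 (Complex.abs_arg_lt_pi_div_two_iff.2 (.inl ha))).2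
  set c := π - 2 * a.arg
  have hc0 : 0 < c := by linarith
  have hac : 2 * a.arg = π - c := by ring
  have hcosh := integrableOn_Z2_mul_cosh_div_cosh ha hna
  rw [Z2Laplace, Z2Laplace, ← integral_Z2_mul_cosh_div_cosh ha hna,
    ← integral_sub hcosh (integrableOn_Z2_mul_exp_neg hc0), ← integral_const_mul,
    ← Real.norm_eq_abs]
  refine norm_integral_le_of_norm_le ((integrableOn_Z2_mul_exp_neg one_pos).const_mul c)
    ((ae_restrict_mem measurableSet_Ioi).mono fun t ht => ?_)
  rw [← mul_sub, norm_mul, hac, Real.norm_of_nonneg (Z2_nonneg t), mul_left_comm c,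
    Real.norm_of_nonneg (sub_nonneg.2 (exp_neg_mul_le_cosh_div_cosh hc0.le ht.le))]
  exact mul_le_mul_of_nonneg_left
    (cosh_div_cosh_sub_exp_neg_le ⟨hc0.le, by linarith⟩ ht.le) (Z2_nonneg t)

end LaplaceTransformZ2

section LaplaceBound

variable {f f' f'' : ℝ → ℂ} {z : ℂ} {K : ℝ}

lemma norm_cexp_neg_mul (z : ℂ) (t : ℝ) : ‖Complex.exp (-(z * t))‖ = rexp (-z.re * t) := by
  simp [Complex.norm_exp]

lemma integrableOn_mul_cexp_neg_of_norm_le_pow (hz : 0 < z.re) (hf : Continuous f) (k : ℕ)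
    (hle : ∀ t, 0 ≤ t → ‖f t‖ ≤ K * t ^ k) :
    IntegrableOn (fun t : ℝ => f t * Complex.exp (-(z * t))) (Ioi 0) := by
  have hexp : IntegrableOn (fun t : ℝ => t ^ k * rexp (-z.re * t)) (Ioi 0) := by
    simpa using integrableOn_rpow_mul_exp_neg_mul_rpow (p := 1) (s := k) (b := z.re)
      (neg_one_lt_zero.trans_le k.cast_nonneg) one_pos hz
  refine (hexp.const_mul K).mono' (hf.mul (by fun_prop)).aestronglyMeasurable
    ((ae_restrict_mem measurableSet_Ioi).mono fun t ht => ?_)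
  rw [norm_mul, norm_cexp_neg_mul, ← mul_assoc]
  exact mul_le_mul_of_nonneg_right (hle t ht.le) (exp_pos _).le

lemma norm_mul_cexp_neg_le (hz : 0 < z.re) {t : ℝ} (ht : 0 ≤ t) :
    ‖f t * Complex.exp (-(z * t))‖ ≤ ‖f t‖ := by
  rw [norm_mul, norm_cexp_neg_mul, neg_mul]
  exact mul_le_of_le_one_right (norm_nonneg _) (exp_le_one_iff.2 (neg_nonpos.2 (by positivity)))

lemma mul_integral_mul_cexp_neg (hf : ∀ t, HasDerivAt f (f' t) t)
    (hi : IntegrableOn (fun t : ℝ => f t * Complex.exp (-(z * t))) (Ioi 0))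
    (hi' : IntegrableOn (fun t : ℝ => f' t * Complex.exp (-(z * t))) (Ioi 0)) :
    z * ∫ t in Ioi (0 : ℝ), f t * Complex.exp (-(z * t)) =
      f 0 + ∫ t in Ioi (0 : ℝ), f' t * Complex.exp (-(z * t)) := by
  have hderiv (t : ℝ) : HasDerivAt (fun t : ℝ => f t * Complex.exp (-(z * t)))
      (f' t * Complex.exp (-(z * t)) - z * (f t * Complex.exp (-(z * t)))) t := by
    have hexp : HasDerivAt (fun t : ℝ => Complex.exp (-(z * t)))
        (Complex.exp (-(z * t)) * -(z * 1)) t :=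
      (((hasDerivAt_id t).ofReal_comp).const_mul z).neg.cexp
    refine ((hf t).mul hexp).congr_deriv ?_
    ring
  have hlim := tendsto_zero_of_hasDerivAt_of_integrableOn_Ioi (fun t _ => hderiv t)
    (hi'.sub (hi.const_mul z)) hi
  have hFTC := integral_Ioi_of_hasDerivAt_of_tendsto' (fun t _ => hderiv t)
    (hi'.sub (hi.const_mul z)) hlim
  rw [integral_sub hi' (hi.const_mul z), integral_const_mul, Complex.ofReal_zero, mul_zero,
    neg_zero, Complex.exp_zero, mul_one] at hFTC
  linear_combination -hFTC

lemma norm_le_norm_zero_add_integral_norm_deriv (hf : ∀ t, HasDerivAt f (f' t) t)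
    (hi : IntegrableOn f' (Ioi 0)) {t : ℝ} (ht : 0 ≤ t) :
    ‖f t‖ ≤ ‖f 0‖ + ∫ s in Ioi (0 : ℝ), ‖f' s‖ := by
  have hFTC := intervalIntegral.integral_eq_sub_of_hasDerivAt (a := 0) (b := t) (fun s _ => hf s)
    ((intervalIntegrable_iff_integrableOn_Ioc_of_le ht).2 (hi.mono_set Ioc_subset_Ioi_self))
  rw [intervalIntegral.integral_of_le ht, eq_sub_iff_add_eq'] at hFTC
  rw [← hFTC]
  refine (norm_add_le _ _).trans (add_le_add_right ((norm_integral_le_integral_norm _).trans ?_) _)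
  exact setIntegral_mono_set hi.norm (.of_forall fun _ => norm_nonneg _)
    Ioc_subset_Ioi_self.eventuallyLE

lemma norm_le_mul_of_norm_deriv_le (hf : ∀ t, HasDerivAt f (f' t) t) (h0 : f 0 = 0)
    (hK : ∀ t, 0 ≤ t → ‖f' t‖ ≤ K) {t : ℝ} (ht : 0 ≤ t) : ‖f t‖ ≤ K * t := by
  simpa [h0] using norm_image_sub_le_of_norm_deriv_le_segment' (a := 0) (b := t)
    (fun s _ => (hf s).hasDerivWithinAt) (fun s hs => hK s hs.1) t ⟨ht, le_rfl⟩

lemma norm_integral_mul_cexp_neg_le (hz : 0 < z.re) (hf : ∀ t, HasDerivAt f (f' t) t)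
    (hf' : ∀ t, HasDerivAt f' (f'' t) t) (hf'' : IntegrableOn f'' (Ioi 0)) (h0 : f 0 = 0) :
    ‖∫ t in Ioi (0 : ℝ), f t * Complex.exp (-(z * t))‖ ≤
      (‖f' 0‖ + ∫ t in Ioi (0 : ℝ), ‖f'' t‖) / ‖z‖ ^ 2 := by
  set K := ‖f' 0‖ + ∫ t in Ioi (0 : ℝ), ‖f'' t‖
  have hK (t : ℝ) (ht : 0 ≤ t) : ‖f' t‖ ≤ K := norm_le_norm_zero_add_integral_norm_deriv hf' hf'' ht
  have hle'' : ∀ᵐ t ∂volume.restrict (Ioi (0 : ℝ)),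
      ‖f'' t * Complex.exp (-(z * t))‖ ≤ ‖f'' t‖ :=
    (ae_restrict_mem measurableSet_Ioi).mono fun t ht => norm_mul_cexp_neg_le hz ht.le
  have hi := integrableOn_mul_cexp_neg_of_norm_le_pow hz
    (continuous_iff_continuousAt.2 fun t => (hf t).continuousAt) 1
    (fun t ht => by simpa using norm_le_mul_of_norm_deriv_le hf h0 hK ht)
  have hi' := integrableOn_mul_cexp_neg_of_norm_le_pow hz
    (continuous_iff_continuousAt.2 fun t => (hf' t).continuousAt) 0
    (fun t ht => by simpa using hK t ht)
  have hi'' : IntegrableOn (fun t : ℝ => f'' t * Complex.exp (-(z * t))) (Ioi 0) :=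
    hf''.norm.mono' (hf''.aestronglyMeasurable.mul
      (Continuous.aestronglyMeasurable (by fun_prop))) hle''
  have heq : z ^ 2 * ∫ t in Ioi (0 : ℝ), f t * Complex.exp (-(z * t)) =
      f' 0 + ∫ t in Ioi (0 : ℝ), f'' t * Complex.exp (-(z * t)) := by
    rw [sq, mul_assoc, mul_integral_mul_cexp_neg hf hi hi', h0, zero_add,
      mul_integral_mul_cexp_neg hf' hi' hi'']
  rw [le_div_iff₀' (pow_pos (norm_pos_iff.2 (ne_zero_of_re_pos hz)) 2), ← norm_pow, ← norm_mul, heq]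
  exact (norm_add_le _ _).trans
    (add_le_add_right (norm_integral_le_of_norm_le hf''.norm hle'') _)

end LaplaceBound

section BoseIntegral

variable {a z : ℂ} {f : ℝ → ℂ} {K : ℝ}

lemma norm_bose_le_exp_neg_half_div (hz : 0 < z.re) : ‖bose z‖ ≤ rexp (-(z.re / 2)) / z.re := by
  set y := z.re
  have hle : y * rexp (y / 2) ≤ rexp y - 1 := by
    have hsinh := self_le_sinh_iff.2 (half_pos hz).le
    have hfactor : rexp y - 1 = 2 * sinh (y / 2) * rexp (y / 2) := by
      rw [Real.sinh_eq, mul_div_cancel₀ _ two_ne_zero, sub_mul, ← Real.exp_add, ← Real.exp_add,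
        add_halves, neg_add_cancel, Real.exp_zero]
    rw [hfactor]
    gcongr
    linarith
  refine (norm_bose_le hz).trans ((inv_anti₀ (by positivity) hle).trans_eq ?_)
  rw [mul_inv, ← Real.exp_neg]
  field_simp

lemma integrableOn_bose_mul (ha : 0 < a.re) (hf : Continuous f)
    (hle : ∀ t, 0 ≤ t → ‖f t‖ ≤ K * t) :
    IntegrableOn (fun x : ℝ => bose (a * x) * f x) (Ioi 0) := by
  have hexp : IntegrableOn (fun x : ℝ => K / a.re * rexp (-(a.re / 2) * x)) (Ioi 0) :=
    (integrableOn_exp_mul_Ioi (by linarith : -(a.re / 2) < 0) 0).const_mul _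
  refine hexp.mono' (((continuousOn_bose_mul ha).mul hf.continuousOn).aestronglyMeasurable
    measurableSet_Ioi) ((ae_restrict_mem measurableSet_Ioi).mono fun x (hx : 0 < x) => ?_)
  have hbose := norm_bose_le_exp_neg_half_div (re_mul_ofReal_pos ha hx)
  rw [Complex.re_mul_ofReal] at hbose
  calc ‖bose (a * x) * f x‖ ≤ rexp (-(a.re * x / 2)) / (a.re * x) * (K * x) := by
        rw [norm_mul]
        gcongr
        exact hle x hx.le
    _ = K / a.re * rexp (-(a.re / 2) * x) := by
        rw [show -(a.re / 2) * x = -(a.re * x / 2) by ring]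
        field_simp

lemma summable_integral_norm_mul_cexp_neg_nat_succ (ha : 0 < a.re) (hf : Continuous f)
    (hle : ∀ t, 0 ≤ t → ‖f t‖ ≤ K * t) :
    Summable fun n : ℕ => ∫ t in Ioi (0 : ℝ),
      ‖f t * Complex.exp (-(((n + 1 : ℕ) : ℝ) * a * t))‖ := by
  have hre : (1 : ℝ) < (2 : ℂ).re := by simp
  have hre_nat (n : ℕ) : 0 < (((n + 1 : ℕ) : ℝ) * a).re := by
    rw [Complex.re_ofReal_mul]
    positivity
  refine .of_nonneg_of_le (fun n => integral_nonneg fun _ => norm_nonneg _) (fun n => ?_)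
    ((summable_integral_norm_cpow_mul_cexp ha hre).mul_left K)
  rw [← integral_const_mul]
  refine setIntegral_mono_on
    (integrableOn_mul_cexp_neg_of_norm_le_pow (hre_nat n) hf 1 (by simpa using hle)).norm
    ((integrableOn_cpow_mul_cexp_neg_mul (by simp) (hre_nat n)).norm.const_mul K)
    measurableSet_Ioi fun t (ht : 0 < t) => ?_
  rw [norm_mul, norm_mul, ← mul_assoc, Complex.norm_cpow_eq_rpow_re_of_pos ht]
  refine mul_le_mul_of_nonneg_right ?_ (norm_nonneg _)
  rw [show (2 - 1 : ℂ).re = 1 by norm_num, rpow_one]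
  exact hle t ht.le

lemma norm_integral_bose_mul_le (ha : 0 < a.re) (hf : Continuous f)
    (hle : ∀ t, 0 ≤ t → ‖f t‖ ≤ K * t)
    (hlaplace : ∀ z : ℂ, 0 < z.re →
      ‖∫ t in Ioi (0 : ℝ), f t * Complex.exp (-(z * t))‖ ≤ K / ‖z‖ ^ 2) :
    ‖∫ x in Ioi (0 : ℝ), bose (a * x) * f x‖ ≤
      K / ‖a‖ ^ 2 * ∑' n : ℕ, 1 / (((n + 1 : ℕ) : ℝ)) ^ 2 := by
  have hre (n : ℕ) : 0 < (((n + 1 : ℕ) : ℝ) * a).re := by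
    rw [Complex.re_ofReal_mul]
    positivity
  have hsum := hasSum_integral_of_summable_integral_norm
    (fun n => integrableOn_mul_cexp_neg_of_norm_le_pow (hre n) hf 1 (by simpa using hle))
    (summable_integral_norm_mul_cexp_neg_nat_succ ha hf hle)
  have hbose : ∫ x in Ioi (0 : ℝ), bose (a * x) * f x = ∫ t in Ioi (0 : ℝ), ∑' n : ℕ,
      f t * Complex.exp (-(((n + 1 : ℕ) : ℝ) * a * t)) := by
    refine setIntegral_congr_fun measurableSet_Ioi fun t ht => ?_
    simp only [mul_comm (bose _)]
    rw [← ((hasSum_cexp_neg_nat_succ_mul (re_mul_ofReal_pos ha ht)).mul_left _).tsum_eq]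
    simp only [Complex.ofReal_natCast, mul_assoc]
  have hinv_sq : Summable fun n : ℕ => 1 / (((n + 1 : ℕ) : ℝ)) ^ 2 :=
    (summable_nat_add_iff 1).2 (Real.summable_one_div_nat_pow.2 one_lt_two)
  rw [hbose, ← hsum.tsum_eq, ← tsum_mul_left]
  refine tsum_of_norm_bounded (hinv_sq.mul_left _).hasSum fun n => (hlaplace _ (hre n)).trans_eq ?_
  rw [norm_mul, Complex.norm_real, Real.norm_natCast]
  field_simp

end BoseIntegral

section BoseOdd

variable {z : ℂ}

lemma differentiableAt_iterate_deriv_boseSubPole (n : ℕ) (hz : |z.im| < 2 * π) :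
    DifferentiableAt ℂ (deriv^[n] boseSubPole) z := by
  induction n generalizing z with
  | zero => exact differentiableAt_boseSubPole hz
  | succ n ih =>
    rw [Function.iterate_succ_apply']
    exact (DifferentiableOn.deriv (fun _ hw => (ih hw).differentiableWithinAt)
      (isOpen_abs_im_lt _)).differentiableAt ((isOpen_abs_im_lt _).mem_nhds hz)

lemma differentiableAt_iterate_deriv_boseSubPole_ofReal (n : ℕ) (t : ℝ) :
    DifferentiableAt ℂ (deriv^[n] boseSubPole) t :=
  differentiableAt_iterate_deriv_boseSubPole n (by simp [pi_pos])

lemma deriv_boseSubPole (hz : 0 < z.re) :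
    deriv boseSubPole z = -(bose z + bose z ^ 2) + (z ^ 2)⁻¹ := by
  have hz0 := ne_zero_of_re_pos hz
  have heq : boseSubPole =ᶠ[𝓝 z] fun w => bose w - w⁻¹ := by
    filter_upwards [isOpen_ne.mem_nhds hz0] with w hw
    rw [boseSubPole_of_ne hw, one_div]
  rw [heq.deriv_eq, ← sub_neg_eq_add]
  exact ((hasDerivAt_bose (cexp_sub_one_ne_zero hz)).sub (hasDerivAt_inv hz0)).deriv

lemma deriv_deriv_boseSubPole (hz : 0 < z.re) :
    deriv (deriv boseSubPole) z = bose z * (1 + bose z) * (1 + 2 * bose z) - 2 / z ^ 3 := by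
  have heq : deriv boseSubPole =ᶠ[𝓝 z] fun w => -(bose w + bose w ^ 2) + (w ^ 2)⁻¹ := by
    filter_upwards [(isOpen_lt continuous_const Complex.continuous_re).mem_nhds hz] with w hw
    exact deriv_boseSubPole hw
  have hz0 := ne_zero_of_re_pos hz
  have hbose := hasDerivAt_bose (cexp_sub_one_ne_zero hz)
  have hderiv := (hbose.add (hbose.pow 2)).neg.add ((hasDerivAt_pow 2 z).inv (pow_ne_zero 2 hz0))
  rw [heq.deriv_eq]
  refine (hderiv.congr_deriv ?_).deriv
  field_simp
  push_cast
  ring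

lemma integrableOn_deriv_deriv_boseSubPole :
    IntegrableOn (fun t : ℝ => deriv (deriv boseSubPole) t) (Ioi 0) := by
  have hcont : Continuous fun t : ℝ => deriv (deriv boseSubPole) t :=
    continuous_iff_continuousAt.2 fun t =>
      (differentiableAt_iterate_deriv_boseSubPole_ofReal 2 t).continuousAt.comp_of_eq
        Complex.continuous_ofReal.continuousAt rfl
  have hbose : (fun t : ℝ => bose t) =O[atTop] fun t => t ^ (-3 : ℝ) := by
    have hexp := bose_mul_isBigO_atTop (a := 1) (by simp)
    simp only [one_mul, Complex.one_re] at hexp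
    exact hexp.trans (isLittleO_exp_neg_mul_rpow_atTop one_pos _).isBigO
  have hbose_one : (fun t : ℝ => bose t) =O[atTop] fun _ => (1 : ℝ) :=
    hbose.trans ((tendsto_rpow_neg_atTop (y := 3) (by norm_num)).isBigO_one ℝ)
  have hone : (fun _ : ℝ => (1 : ℂ)) =O[atTop] fun _ => (1 : ℝ) :=
    Asymptotics.isBigO_const_const _ one_ne_zero _
  have hinv : (fun t : ℝ => 2 / (t : ℂ) ^ 3) =O[atTop] fun t => t ^ (-3 : ℝ) := by
    refine .of_bound 2 ((eventually_gt_atTop 0).mono fun t ht => ?_)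
    rw [rpow_neg ht.le]
    norm_cast
    simp [div_eq_mul_inv]
  have hO : (fun t : ℝ => deriv (deriv boseSubPole) t) =O[atTop] fun t => t ^ (-3 : ℝ) := by
    have := ((hbose.mul (hone.add hbose_one)).mul
      (hone.add (hbose_one.const_mul_left 2))).congr_right (g₂ := fun t => t ^ (-3 : ℝ))
      (by simp)
    refine (this.sub hinv).congr' ?_ .rfl
    filter_upwards [eventually_gt_atTop 0] with t ht
    rw [deriv_deriv_boseSubPole (by simpa using ht)]
  exact (hcont.locallyIntegrable.locallyIntegrableOn (Ici 0)).integrableOn_of_isBigO_atTop hO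
    (integrableAtFilter_rpow_atTop_iff.2 (by norm_num)) |>.mono_set Ioi_subset_Ici_self

/-- `boseOdd t = coth(t/2)/2 - 1/t`, the Bose function on the real line without its pole and its
value `-1/2` at the origin; it is odd, vanishes at `0` and has integrable second derivative. -/
noncomputable def boseOdd (t : ℝ) : ℂ := boseSubPole t + 1 / 2

lemma boseOdd_zero : boseOdd 0 = 0 := by
  rw [boseOdd, Complex.ofReal_zero, boseSubPole_zero]
  norm_num

lemma hasDerivAt_boseOdd (t : ℝ) : HasDerivAt boseOdd (deriv boseSubPole t) t :=
  (differentiableAt_iterate_deriv_boseSubPole_ofReal 0 t).hasDerivAt.comp_ofReal.add_const _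

lemma hasDerivAt_deriv_boseSubPole_ofReal (t : ℝ) :
    HasDerivAt (fun t : ℝ => deriv boseSubPole t) (deriv (deriv boseSubPole) t) t :=
  (differentiableAt_iterate_deriv_boseSubPole_ofReal 1 t).hasDerivAt.comp_ofReal

lemma continuous_boseOdd : Continuous boseOdd :=
  continuous_iff_continuousAt.2 fun t => (hasDerivAt_boseOdd t).continuousAt

/-- The Laplace bound for `boseOdd`: this is `|boseOdd'(0)| + ∫₀^∞ |boseOdd''|`. -/
noncomputable def boseOddBound : ℝ :=
  ‖deriv boseSubPole 0‖ + ∫ t in Ioi (0 : ℝ), ‖deriv (deriv boseSubPole) t‖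

lemma norm_boseOdd_le {t : ℝ} (ht : 0 ≤ t) : ‖boseOdd t‖ ≤ boseOddBound * t :=
  norm_le_mul_of_norm_deriv_le hasDerivAt_boseOdd boseOdd_zero (fun _ hs => by
    simpa [boseOddBound] using
      norm_le_norm_zero_add_integral_norm_deriv hasDerivAt_deriv_boseSubPole_ofReal
      integrableOn_deriv_deriv_boseSubPole hs) ht

lemma norm_integral_bose_mul_boseOdd_le {a : ℂ} (ha : 0 < a.re) :
    ‖∫ x in Ioi (0 : ℝ), bose (a * x) * boseOdd x‖ ≤
      boseOddBound / ‖a‖ ^ 2 * ∑' n : ℕ, 1 / ((n + 1 : ℕ) : ℝ) ^ 2 :=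
  norm_integral_bose_mul_le ha continuous_boseOdd (fun _ => norm_boseOdd_le) fun _ hz => by
    simpa [boseOddBound] using norm_integral_mul_cexp_neg_le hz hasDerivAt_boseOdd
      hasDerivAt_deriv_boseSubPole_ofReal integrableOn_deriv_deriv_boseSubPole boseOdd_zero

lemma integrableOn_bose_mul_boseOdd {a : ℂ} {b : ℝ} (ha : 0 < a.re) (hb : 0 < b) :
    IntegrableOn (fun x : ℝ => bose (a * x) * boseOdd (b * x)) (Ioi 0) :=
  integrableOn_bose_mul (K := boseOddBound * b) ha
    (continuous_boseOdd.comp (continuous_const_mul b)) fun _ ht => by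
    simpa only [mul_assoc] using norm_boseOdd_le (mul_nonneg hb.le ht)

lemma norm_integral_bose_mul_boseOdd_mul_le {a : ℂ} {b : ℝ} (ha : 0 < a.re) (hb : 0 < b) :
    ‖∫ x in Ioi (0 : ℝ), bose (a * x) * boseOdd (b * x)‖ ≤
      (boseOddBound * ∑' n : ℕ, 1 / ((n + 1 : ℕ) : ℝ) ^ 2) * b / ‖a‖ ^ 2 := by
  have hb' : (b : ℂ) ≠ 0 := by exact_mod_cast hb.ne'
  have hscale := integral_comp_mul_left_Ioi (fun x : ℝ => bose (a / b * x) * boseOdd x) 0 hb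
  have hcongr (x : ℝ) : a / b * (b * x : ℝ) = a * x := by
    push_cast
    field_simp
  simp only [hcongr, mul_zero] at hscale
  have hle := norm_integral_bose_mul_boseOdd_le (a := a / b)
    (by rw [Complex.div_ofReal_re]; positivity)
  rw [hscale, norm_smul, norm_inv, Real.norm_of_nonneg hb.le]
  rw [norm_div, Complex.norm_real, Real.norm_of_nonneg hb.le] at hle
  refine (mul_le_mul_of_nonneg_left hle (inv_nonneg.2 hb.le)).trans_eq ?_
  field_simp

end BoseOdd

section Polarization

variable {a c : ℂ} {b : ℝ}

lemma hasMellin_one_iff {f : ℝ → ℂ} {m : ℂ} :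
    HasMellin f 1 m ↔ IntegrableOn f (Ioi 0) ∧ ∫ x in Ioi (0 : ℝ), f x = m := by
  simp [HasMellin, MellinConvergent, mellin]

lemma hasMellin_cpow_neg_one_smul_boseReg (ha : 0 < a.re) :
    HasMellin (fun x : ℝ => (x : ℂ) ^ (-1 : ℂ) • boseReg a x) 1
      (Complex.log a / 2 + Real.eulerMascheroniConstant / 2 - Complex.log (2 * π) / 2 + 1 / a) := by
  rw [HasMellin, MellinConvergent.cpow_smul, mellin_cpow_smul, add_neg_cancel]
  exact ⟨mellinConvergent_boseReg ha (by simp), mellin_boseReg_zero ha⟩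

lemma boseSubPole_mul_boseSubPole (ha : 0 < a.re) (hc : 0 < c.re) (hb : a + c = b) {x : ℝ}
    (hx : 0 < x) :
    boseSubPole (a * x) * boseSubPole (c * x) =
      (bose (a * x) + bose (c * x)) * boseOdd (b * x) + boseReg b x
        - (1 / 2 : ℂ) • (boseReg a x + boseReg c x)
        - ((a / (b * c)) • ((x : ℂ) ^ (-1 : ℂ) • boseReg a x) +
          (c / (b * a)) • ((x : ℂ) ^ (-1 : ℂ) • boseReg c x))
        + (1 / (a * c)) • (Ioi (1 : ℝ)).indicator (fun t : ℝ => (t : ℂ) ^ (-2 : ℂ)) x := by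
  have hbre : 0 < (b : ℂ).re := by
    rw [← hb, Complex.add_re]
    positivity
  have ha0 := ne_zero_of_re_pos ha
  have hc0 := ne_zero_of_re_pos hc
  have hb0 := ne_zero_of_re_pos hbre
  have hx0 : (x : ℂ) ≠ 0 := by exact_mod_cast hx.ne'
  have hz := re_mul_ofReal_pos ha hx
  have hw := re_mul_ofReal_pos hc hx
  have hzw := re_mul_ofReal_pos hbre hx
  have hsum : a * x + c * x = b * x := by rw [← add_mul, hb]
  have hmul := bose_mul_bose (cexp_sub_one_ne_zero hz) (cexp_sub_one_ne_zero hw)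
    (hsum ▸ cexp_sub_one_ne_zero hzw)
  rw [hsum] at hmul
  rw [boseOdd, Complex.ofReal_mul, boseSubPole_of_ne (ne_zero_of_re_pos hz),
    boseSubPole_of_ne (ne_zero_of_re_pos hw), boseSubPole_of_ne (ne_zero_of_re_pos hzw),
    Complex.cpow_neg_one]
  simp only [boseReg, smul_eq_mul]
  rw [← hb] at hb0 hmul ⊢
  generalize bose (a * x) = A, bose (c * x) = C, bose ((a + c) * x) = B at *
  refine sub_eq_zero.1 (Eq.trans ?_ (sub_eq_zero.2 hmul))
  rcases le_or_gt x 1 with h1 | h1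
  · have hmem : x ∈ Ioc 0 1 := ⟨hx, h1⟩
    simp only [indicator_of_mem hmem, indicator_of_notMem (show x ∉ Ioi 1 by simpa using h1)]
    field_simp
    ring
  · simp only [indicator_of_notMem (fun h : x ∈ Ioc 0 1 => h1.not_ge h.2),
      indicator_of_mem (mem_Ioi.2 h1), Complex.cpow_neg, Complex.cpow_ofNat]
    field_simp
    ring

lemma integral_boseSubPole_mul_boseSubPole (ha : 0 < a.re) (hc : 0 < c.re) (hb : a + c = b) :
    ∫ x in Ioi (0 : ℝ), boseSubPole (a * x) * boseSubPole (c * x) =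
      (∫ x in Ioi (0 : ℝ), (bose (a * x) + bose (c * x)) * boseOdd (b * x))
        - Complex.log b / b + (Complex.log a / a + Complex.log c / c) / 2
        - (a / c * (Complex.log a + Real.eulerMascheroniConstant - Complex.log (2 * π)) +
          c / a * (Complex.log c + Real.eulerMascheroniConstant - Complex.log (2 * π))) /
          (2 * b) := by
  have hbre : 0 < (b : ℂ).re := by
    rw [← hb, Complex.add_re]
    positivity
  have hbpos : 0 < b := hbre
  have hbose : HasMellin (fun x : ℝ => (bose (a * x) + bose (c * x)) * boseOdd (b * x)) 1 _ :=
    hasMellin_one_iff.2 ⟨by simpa only [add_mul, Pi.add_def] using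
      (integrableOn_bose_mul_boseOdd ha hbpos).add (integrableOn_bose_mul_boseOdd hc hbpos), rfl⟩
  have hreg {z : ℂ} (hz : 0 < z.re) : HasMellin (boseReg z) 1 (-Complex.log z / z + 1 / 2) :=
    ⟨mellinConvergent_boseReg hz (by simp), mellin_boseReg_one hz⟩
  have htot := hasMellin_add' (hasMellin_sub' (hasMellin_sub' (hasMellin_add' hbose (hreg hbre))
      (hasMellin_const_smul' (hasMellin_add' (hreg ha) (hreg hc)) (1 / 2)))
      (hasMellin_add'
        (hasMellin_const_smul' (hasMellin_cpow_neg_one_smul_boseReg ha) (a / (b * c)))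
        (hasMellin_const_smul' (hasMellin_cpow_neg_one_smul_boseReg hc) (c / (b * a)))))
    (hasMellin_const_smul' (hasMellin_cpow_Ioi (-2) (s := 1) (by norm_num)) (1 / (a * c)))
  rw [setIntegral_congr_fun measurableSet_Ioi fun x hx => boseSubPole_mul_boseSubPole ha hc hb hx,
    (hasMellin_one_iff.1 htot).2]
  have ha0 := ne_zero_of_re_pos ha
  have hc0 := ne_zero_of_re_pos hc
  have hb0 := ne_zero_of_re_pos hbre
  simp only [smul_eq_mul]
  generalize ∫ x in Ioi (0 : ℝ), (bose (a * x) + bose (c * x)) * boseOdd (b * x) = M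
  rw [← hb] at hb0 ⊢
  field_simp
  ring

end Polarization

section UnitCircle

variable {a z : ℂ}

lemma bose_conj (z : ℂ) : bose (conj z) = conj (bose z) := by
  simp [bose, Complex.exp_conj]

lemma boseSubPole_conj (hz : 0 < z.re) : boseSubPole (conj z) = conj (boseSubPole z) := by
  rw [boseSubPole_of_ne (ne_zero_of_re_pos hz),
    boseSubPole_of_ne ((map_ne_zero _).2 (ne_zero_of_re_pos hz)), bose_conj]
  simp

lemma ofReal_norm_boseSubPole_mul_sq (ha : 0 < a.re) {x : ℝ} (hx : 0 < x) :
    ((‖boseSubPole (a * x)‖ ^ 2 : ℝ) : ℂ) = boseSubPole (a * x) * boseSubPole (conj a * x) := by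
  rw [Complex.ofReal_pow, ← Complex.mul_conj', ← boseSubPole_conj (re_mul_ofReal_pos ha hx),
    map_mul, Complex.conj_ofReal]

lemma conj_boseOdd {t : ℝ} (ht : 0 < t) : conj (boseOdd t) = boseOdd t := by
  simp [boseOdd, ← boseSubPole_conj (show 0 < (t : ℂ).re from ht), Complex.conj_ofNat]

lemma integral_bose_mul_boseOdd_add_conj (ha : 0 < a.re) {b : ℝ} (hb : 0 < b) :
    ∫ x in Ioi (0 : ℝ), (bose (a * x) + bose (conj a * x)) * boseOdd (b * x) =
      (2 * (∫ x in Ioi (0 : ℝ), bose (a * x) * boseOdd (b * x)).re : ℝ) := by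
  have hconj : EqOn (fun x : ℝ => bose (conj a * x) * boseOdd (b * x))
      (fun x : ℝ => conj (bose (a * x) * boseOdd (b * x))) (Ioi 0) := fun x hx => by
    simp only [map_mul, conj_boseOdd (mul_pos hb hx), ← bose_conj, Complex.conj_ofReal]
  simp only [add_mul]
  rw [integral_add (integrableOn_bose_mul_boseOdd ha hb)
    (integrableOn_bose_mul_boseOdd (by simpa using ha) hb),
    setIntegral_congr_fun measurableSet_Ioi hconj, integral_conj, Complex.add_conj]

lemma integral_norm_boseSubPole_mul_sq (ha : 0 < a.re) (hna : ‖a‖ = 1) :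
    ∫ x in Ioi (0 : ℝ), ‖boseSubPole (a * x)‖ ^ 2 =
      2 * (∫ x in Ioi (0 : ℝ), bose (a * x) * boseOdd (2 * a.re * x)).re
        - Real.log (2 * a.re) / (2 * a.re) + 2 * a.arg * a.im
        + (Real.eulerMascheroniConstant - Real.log (2 * π)) * (1 / (2 * a.re) - a.re) := by
  have hac : a * conj a = 1 := by simp [Complex.mul_conj', hna]
  have hb : a + conj a = (2 * a.re : ℝ) := Complex.add_conj a
  have hlog : Complex.log a = a.arg * Complex.I := by simp [Complex.log, hna]
  have hlog_conj : Complex.log (conj a) = -(a.arg * Complex.I) := by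
    rw [Complex.log_conj _ (Complex.arg_lt_pi_iff.2 (.inl ha.le)).ne, hlog]
    simp
  have hlog_two_mul : Complex.log (2 * a.re : ℝ) = Real.log (2 * a.re) :=
    (Complex.ofReal_log (by positivity)).symm
  have hlog_two_pi : Complex.log (2 * π) = Real.log (2 * π) := by
    rw [Complex.ofReal_log (by positivity)]
    push_cast
    rfl
  have hre : (a.re : ℂ) ≠ 0 := by exact_mod_cast ha.ne'
  rw [← Complex.ofReal_inj, ← integral_complex_ofReal,
    setIntegral_congr_fun measurableSet_Ioi fun _ => ofReal_norm_boseSubPole_mul_sq ha,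
    integral_boseSubPole_mul_boseSubPole ha (by simpa using ha) hb,
    integral_bose_mul_boseOdd_add_conj ha (by positivity), hlog, hlog_conj, hlog_two_mul,
    hlog_two_pi]
  have hsub := Complex.sub_conj a
  push_cast at hb hsub ⊢
  simp only [div_eq_mul_inv _ a, div_eq_mul_inv _ (conj a), inv_eq_of_mul_eq_one_right hac,
    inv_eq_of_mul_eq_one_left hac]
  generalize (∫ x in Ioi (0 : ℝ), bose (a * x) * boseOdd (2 * a.re * x)).re = M
  field_simp
  linear_combination
    (-2 * a.re * a.arg * Complex.I - a.arg * Complex.I * (a + conj a)) * hsub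
      + 2 * a.arg * a.im * hb - (Real.eulerMascheroniConstant - Real.log (2 * π)) *
        ((a + conj a + 2 * a.re) * hb - 2 * hac)
      - (4 * a.re * a.arg * a.im + 2 * a.arg * a.im * (a + conj a)) * Complex.I_sq

end UnitCircle

section Asymptotics

open Asymptotics

lemma exists_abs_Z2Laplace_two_mul_sub_le : ∃ K, ∀ δ ∈ Ioo 0 (π / 2),
    |Z2Laplace (2 * δ) -
      ((Real.eulerMascheroniConstant - Real.log (2 * π) - Real.log (2 * sin δ)) / (2 * sin δ)
        + ((π - 2 * δ) * cos δ - (Real.eulerMascheroniConstant - Real.log (2 * π)) * sin δ))| ≤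
      K * δ := by
  set S := boseOddBound * ∑' n : ℕ, 1 / ((n + 1 : ℕ) : ℝ) ^ 2
  refine ⟨4 * |S| + 2 * Z2Laplace 1, fun δ hδ => ?_⟩
  have hθ : π / 2 - δ ∈ Ioo (-(π / 2)) (π / 2) := ⟨by linarith [hδ.2, pi_pos], by linarith [hδ.1]⟩
  set a := Complex.exp ((π / 2 - δ : ℝ) * Complex.I)
  have hre : a.re = sin δ := by rw [Complex.exp_ofReal_mul_I_re, cos_pi_div_two_sub]
  have him : a.im = cos δ := by rw [Complex.exp_ofReal_mul_I_im, sin_pi_div_two_sub]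
  have harg : a.arg = π / 2 - δ := arg_exp_mul_I_of_mem_Ioo hθ
  have hre_pos : 0 < a.re := exp_mul_I_re_pos hθ
  have hna : ‖a‖ = 1 := Complex.norm_exp_ofReal_mul_I _
  have hplancherel := abs_integral_norm_boseSubPole_sq_sub_le hre_pos hna
    (by linarith [hδ.2])
  have hM := (Complex.abs_re_le_norm _).trans
    (norm_integral_bose_mul_boseOdd_mul_le hre_pos (mul_pos two_pos hre_pos))
  rw [integral_norm_boseSubPole_mul_sq hre_pos hna] at hplancherel
  rw [hna, one_pow, div_one] at hM
  rw [hre] at hM hre_pos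
  rw [hre, him, harg, show π - 2 * (π / 2 - δ) = 2 * δ by ring] at hplancherel
  have hM' : S * (2 * sin δ) ≤ 2 * |S| * δ := by
    nlinarith [le_abs_self S, sin_lt hδ.1, abs_nonneg S]
  rw [abs_le] at hM hplancherel ⊢
  rw [sub_div]
  constructor <;> linarith [div_eq_mul_one_div
    (Real.eulerMascheroniConstant - Real.log (2 * π)) (2 * sin δ)]

lemma Z2Laplace_two_mul_sub_isBigO :
    (fun δ => Z2Laplace (2 * δ) -
      ((Real.eulerMascheroniConstant - Real.log (2 * π) - Real.log (2 * sin δ)) / (2 * sin δ) + π))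
      =O[𝓝[>] 0] fun δ => δ := by
  obtain ⟨K, hK⟩ := exists_abs_Z2Laplace_two_mul_sub_le
  have hsmooth : (fun δ => (π - 2 * δ) * cos δ -
      (Real.eulerMascheroniConstant - Real.log (2 * π)) * sin δ - π) =O[𝓝[>] 0] fun δ => δ := by
    have hdiff : DifferentiableAt ℝ (fun δ => (π - 2 * δ) * cos δ -
      (Real.eulerMascheroniConstant - Real.log (2 * π)) * sin δ) 0 := by fun_prop
    simpa using hdiff.isBigO_sub.mono nhdsWithin_le_nhds
  have hmain := IsBigO.of_bound (g := fun δ : ℝ => δ) K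
    (f := fun δ => Z2Laplace (2 * δ) -
      ((Real.eulerMascheroniConstant - Real.log (2 * π) - Real.log (2 * sin δ)) / (2 * sin δ)
        + ((π - 2 * δ) * cos δ - (Real.eulerMascheroniConstant - Real.log (2 * π)) * sin δ)))
    (l := 𝓝[>] 0) (by
      filter_upwards [Ioo_mem_nhdsGT (div_pos pi_pos two_pos)] with δ hδ
      rw [Real.norm_of_nonneg hδ.1.le]
      exact hK δ hδ)
  refine (hmain.add hsmooth).congr_left fun δ => ?_
  ring

lemma inv_sin_sub_inv_isBigO : (fun δ => (sin δ)⁻¹ - δ⁻¹) =O[𝓝[>] 0] fun δ => δ := by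
  refine .of_bound 1 ?_
  filter_upwards [Ioo_mem_nhdsGT zero_lt_one] with δ hδ
  have hsin := sin_gt_sub_cube hδ.1
  have hhalf : δ / 2 ≤ sin δ := by nlinarith [hδ.1, hδ.2, sq_nonneg δ]
  have hsin_pos : 0 < sin δ := (half_pos hδ.1).trans_le hhalf
  rw [inv_sub_inv hsin_pos.ne' hδ.1.ne', Real.norm_of_nonneg hδ.1.le,
    Real.norm_of_nonneg (div_nonneg (sub_nonneg.2 (sin_lt hδ.1).le) (mul_pos hsin_pos hδ.1).le),
    div_le_iff₀ (mul_pos hsin_pos hδ.1)]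
  nlinarith [hδ.1, hδ.2, mul_pos hδ.1 hδ.1, mul_le_mul_of_nonneg_left hhalf (mul_pos hδ.1 hδ.1).le]

lemma log_sin_sub_log_isBigO :
    (fun δ => Real.log (sin δ) - Real.log δ) =O[𝓝[>] 0] fun δ => δ ^ 2 := by
  refine IsBigO.trans (g := fun δ => δ * ((sin δ)⁻¹ - δ⁻¹)) (.of_bound 1 ?_)
    (((isBigO_refl _ _).mul inv_sin_sub_inv_isBigO).congr_right fun δ => (sq δ).symm)
  filter_upwards [Ioo_mem_nhdsGT pi_pos] with δ hδ
  have hsin_pos : 0 < sin δ := sin_pos_of_mem_Ioo hδ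
  have hδ0 : 0 < δ := hδ.1
  have hratio : δ * ((sin δ)⁻¹ - δ⁻¹) = δ / sin δ - 1 := by field_simp
  have hle := log_le_sub_one_of_pos (div_pos hδ.1 hsin_pos)
  have hlog : Real.log (sin δ) ≤ Real.log δ := log_le_log hsin_pos (sin_lt hδ.1).le
  rw [Real.log_div hδ0.ne' hsin_pos.ne'] at hle
  rw [hratio, one_mul, norm_sub_rev, Real.norm_of_nonneg (sub_nonneg.2 hlog)]
  exact hle.trans (le_abs_self _)

lemma inv_sin_isBigO : (fun δ => (sin δ)⁻¹) =O[𝓝[>] 0] fun δ => δ⁻¹ := by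
  refine .of_bound (2 / π)⁻¹ ?_
  filter_upwards [Ioc_mem_nhdsGT (div_pos pi_pos two_pos)] with δ hδ
  have hle : 2 / π * δ ≤ sin δ := mul_le_sin hδ.1.le hδ.2
  have hpos : 0 < 2 / π * δ := mul_pos (div_pos two_pos pi_pos) hδ.1
  rw [Real.norm_of_nonneg (inv_nonneg.2 (hpos.le.trans hle)),
    Real.norm_of_nonneg (inv_nonneg.2 hδ.1.le), ← mul_inv]
  exact inv_anti₀ hpos hle

lemma one_isBigO_log_inv : (fun _ => (1 : ℝ)) =O[𝓝[>] 0] fun δ : ℝ => Real.log (1 / δ) := by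
  refine (isLittleO_const_left.2 (.inr ?_)).isBigO
  simp only [one_div]
  exact tendsto_norm_atTop_atTop.comp (tendsto_log_atTop.comp tendsto_inv_nhdsGT_zero)

lemma id_isBigO_mul_log_inv :
    (fun δ : ℝ => δ) =O[𝓝[>] 0] fun δ : ℝ => δ * Real.log (1 / δ) := by
  simpa only [mul_one] using (isBigO_refl (fun δ : ℝ => δ) _).mul one_isBigO_log_inv

lemma sub_log_sin_div_sub_isBigO (A : ℝ) :
    (fun δ => (A - Real.log (sin δ)) / (2 * sin δ) - (A - Real.log δ) / (2 * δ))
      =O[𝓝[>] 0] fun δ => δ * Real.log (1 / δ) := by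
  have hlog : (fun δ => (A - Real.log δ) / 2) =O[𝓝[>] 0] fun δ => Real.log (1 / δ) := by
    refine ((one_isBigO_log_inv.const_mul_left (A / 2)).add
      ((isBigO_refl (fun δ : ℝ => Real.log (1 / δ)) _).const_mul_left (1 / 2))).congr_left
      fun δ => ?_
    rw [one_div δ, Real.log_inv]
    ring
  have hsin : (fun δ => (Real.log (sin δ) - Real.log δ) / 2 * (sin δ)⁻¹)
      =O[𝓝[>] 0] fun δ => δ := by
    refine ((log_sin_sub_log_isBigO.const_mul_left (1 / 2)).mul inv_sin_isBigO).congr' ?_ ?_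
    · exact .of_forall fun δ => by ring
    · filter_upwards [self_mem_nhdsWithin] with δ hδ
      have := (mem_Ioi.1 hδ).ne'
      field_simp
  refine (((hlog.mul inv_sin_sub_inv_isBigO).congr_right fun δ => mul_comm _ _).sub
    (hsin.trans id_isBigO_mul_log_inv)).congr_left fun δ => ?_
  simp only [div_eq_mul_inv, mul_inv]
  ring

lemma Z2Laplace_two_mul_sub_log_inv_isBigO :
    (fun δ => Z2Laplace (2 * δ) -
      (Real.log (1 / δ) / (2 * δ) +
        (Real.eulerMascheroniConstant - Real.log (4 * π)) / (2 * δ) + π))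
      =O[𝓝[>] 0] fun δ => δ * Real.log (1 / δ) := by
  refine ((Z2Laplace_two_mul_sub_isBigO.trans id_isBigO_mul_log_inv).add
    (sub_log_sin_div_sub_isBigO (Real.eulerMascheroniConstant - Real.log (4 * π)))).congr' ?_ .rfl
  filter_upwards [Ioo_mem_nhdsGT pi_pos] with δ hδ
  have hsin_pos : 0 < sin δ := sin_pos_of_mem_Ioo hδ
  rw [show 4 * π = 2 * (2 * π) by ring, Real.log_mul two_ne_zero two_pi_pos.ne',
    Real.log_mul two_ne_zero hsin_pos.ne', one_div, Real.log_inv]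
  ring

lemma Z2Laplace_two_mul_isBigO :
    (fun δ => Z2Laplace (2 * δ)) =O[𝓝[>] 0] fun δ => δ⁻¹ * Real.log (1 / δ) := by
  have hid : (fun δ : ℝ => δ) =O[𝓝[>] 0] fun δ : ℝ => δ⁻¹ := by
    refine .of_bound 1 ?_
    filter_upwards [Ioc_mem_nhdsGT zero_lt_one] with δ hδ
    rw [Real.norm_of_nonneg hδ.1.le, Real.norm_of_nonneg (inv_nonneg.2 hδ.1.le), one_mul]
    exact hδ.2.trans ((one_le_inv₀ hδ.1).2 hδ.2)
  have hone : (fun _ => (1 : ℝ)) =O[𝓝[>] 0] fun δ : ℝ => δ⁻¹ := by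
    refine (isLittleO_const_left.2 (.inr ?_)).isBigO
    exact tendsto_norm_atTop_atTop.comp tendsto_inv_nhdsGT_zero
  set A := Real.eulerMascheroniConstant - Real.log (4 * π)
  have hlead : (fun δ : ℝ => δ⁻¹ * ((1 / 2) * Real.log (1 / δ) + A / 2 * 1))
      =O[𝓝[>] 0] fun δ => δ⁻¹ * Real.log (1 / δ) :=
    (isBigO_refl _ _).mul
      (((isBigO_refl _ _).const_mul_left _).add (one_isBigO_log_inv.const_mul_left _))
  refine (((Z2Laplace_two_mul_sub_log_inv_isBigO.trans (hid.mul (isBigO_refl _ _))).add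
    hlead).add ((hone.mul one_isBigO_log_inv).const_mul_left π)).congr_left fun δ => ?_
  ring

lemma Z2Laplace_isBigO : Z2Laplace =O[𝓝[>] 0] fun δ => δ⁻¹ * Real.log (1 / δ) := by
  have hhalf : Tendsto (fun δ : ℝ => δ / 2) (𝓝[>] 0) (𝓝[>] 0) := by
    refine tendsto_nhdsWithin_of_tendsto_nhds_of_eventually_within _ ?_ ?_
    · simpa using ((continuous_id.div_const 2).tendsto (0 : ℝ)).mono_left nhdsWithin_le_nhds
    · filter_upwards [self_mem_nhdsWithin] with δ hδ using half_pos (mem_Ioi.1 hδ)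
  have hlog : (fun δ : ℝ => Real.log (1 / (δ / 2))) =O[𝓝[>] 0] fun δ => Real.log (1 / δ) := by
    refine ((isBigO_refl _ _).add (one_isBigO_log_inv.const_mul_left (Real.log 2))).congr' ?_ .rfl
    filter_upwards [self_mem_nhdsWithin] with δ hδ
    rw [one_div_div, Real.log_div two_ne_zero (mem_Ioi.1 hδ).ne', one_div, Real.log_inv]
    ring
  have hinv : (fun δ : ℝ => (δ / 2)⁻¹) =O[𝓝[>] 0] fun δ => δ⁻¹ :=
    ((isBigO_refl (fun δ : ℝ => δ⁻¹) _).const_mul_left 2).congr_left fun δ => by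
      rw [inv_div, div_eq_mul_inv]
  refine ((Z2Laplace_two_mul_isBigO.comp_tendsto hhalf).trans (hinv.mul hlog)).congr_left
    fun δ => ?_
  rw [Function.comp_apply, mul_div_cancel₀ δ two_ne_zero]

lemma setIntegral_Ioi_Z2_mul_exp_neg_le {δ m : ℝ} (hδ : 0 < δ) (hm : 0 ≤ m) :
    ∫ t in Ioi m, Z2 t * rexp (-(2 * δ) * t) ≤ rexp (-δ * m) * Z2Laplace δ := by
  have hint := integrableOn_Z2_mul_exp_neg hδ
  have hsub : Ioi m ⊆ Ioi (0 : ℝ) := Ioi_subset_Ioi hm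
  have hnonneg (t : ℝ) : 0 ≤ Z2 t * rexp (-δ * t) := mul_nonneg (Z2_nonneg t) (exp_pos _).le
  calc ∫ t in Ioi m, Z2 t * rexp (-(2 * δ) * t)
      ≤ ∫ t in Ioi m, rexp (-δ * m) * (Z2 t * rexp (-δ * t)) := by
        refine setIntegral_mono_on
          ((integrableOn_Z2_mul_exp_neg (mul_pos two_pos hδ)).mono_set hsub)
          ((hint.mono_set hsub).const_mul _) measurableSet_Ioi fun t ht => ?_
        have hexp : rexp (-δ * t) ≤ rexp (-δ * m) :=
          exp_le_exp.2 (mul_le_mul_of_nonpos_left (mem_Ioi.1 ht).le (neg_nonpos.2 hδ.le))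
        calc Z2 t * rexp (-(2 * δ) * t)
            = rexp (-δ * t) * (Z2 t * rexp (-δ * t)) := by
              rw [show -(2 * δ) * t = -δ * t + -δ * t by ring, exp_add]
              ring
          _ ≤ rexp (-δ * m) * (Z2 t * rexp (-δ * t)) :=
              mul_le_mul_of_nonneg_right hexp (hnonneg t)
    _ = rexp (-δ * m) * ∫ t in Ioi m, Z2 t * rexp (-δ * t) := integral_const_mul _ _
    _ ≤ rexp (-δ * m) * Z2Laplace δ :=
        mul_le_mul_of_nonneg_left
          (setIntegral_mono_set hint (.of_forall hnonneg) hsub.eventuallyLE) (exp_pos _).le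

lemma exp_neg_mul_le_sq {δ m : ℝ} (hδ : 0 < δ) (hm : 2 * (1 / δ) * Real.log (1 / δ) ≤ m) :
    rexp (-δ * m) ≤ δ ^ 2 := by
  rw [← Real.le_log_iff_exp_le (pow_pos hδ 2), Real.log_pow]
  have hmul := mul_le_mul_of_nonneg_left hm hδ.le
  rw [one_div, Real.log_inv] at hmul
  have hcancel : δ * (2 * δ⁻¹ * -Real.log δ) = -(2 * Real.log δ) := by field_simp
  push_cast
  linarith

lemma abs_intervalIntegral_Z2_mul_exp_neg_sub_Z2Laplace_le {δ m : ℝ} (hδ : 0 < δ)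
    (hm : 0 ≤ m) : |(∫ t in (0 : ℝ)..m, Z2 t * rexp (-2 * δ * t)) - Z2Laplace (2 * δ)| ≤
      rexp (-δ * m) * Z2Laplace δ := by
  have hint := integrableOn_Z2_mul_exp_neg (mul_pos two_pos hδ)
  have hsplit := setIntegral_union (Ioc_disjoint_Ioi le_rfl) measurableSet_Ioi
    (hint.mono_set Ioc_subset_Ioi_self) (hint.mono_set (Ioi_subset_Ioi hm))
  rw [Ioc_union_Ioi_eq_Ioi hm, ← intervalIntegral.integral_of_le hm] at hsplit
  rw [Z2Laplace, hsplit, neg_mul 2 δ, sub_add_cancel_left, abs_neg, abs_of_nonneg]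
  · exact setIntegral_Ioi_Z2_mul_exp_neg_le hδ hm
  · exact setIntegral_nonneg measurableSet_Ioi fun t _ => mul_nonneg (Z2_nonneg t) (exp_pos _).le

lemma intervalIntegral_Z2_mul_exp_neg_sub_Z2Laplace_isBigO {μ : ℝ → ℝ}
    (hμ : ∀ᶠ y in atTop, 2 * y * Real.log y ≤ μ y) :
    (fun δ => (∫ t in (0 : ℝ)..μ (1 / δ), Z2 t * rexp (-2 * δ * t)) - Z2Laplace (2 * δ))
      =O[𝓝[>] 0] fun δ => δ * Real.log (1 / δ) := by
  have hinv : Tendsto (fun δ : ℝ => 1 / δ) (𝓝[>] 0) atTop := by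
    simpa only [one_div] using tendsto_inv_nhdsGT_zero
  refine IsBigO.trans (g := fun δ => δ ^ 2 * Z2Laplace δ) (.of_bound 1 ?_) ?_
  · filter_upwards [hinv.eventually hμ, Ioc_mem_nhdsGT zero_lt_one] with δ hgrow hδ
    have hlog : 0 ≤ Real.log (1 / δ) := Real.log_nonneg (one_le_one_div hδ.1 hδ.2)
    have hm : 0 ≤ μ (1 / δ) := le_trans
      (mul_nonneg (mul_nonneg two_pos.le (one_div_pos.2 hδ.1).le) hlog) hgrow
    rw [one_mul, Real.norm_of_nonneg (mul_nonneg (sq_nonneg δ) (Z2Laplace_nonneg δ))]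
    exact (abs_intervalIntegral_Z2_mul_exp_neg_sub_Z2Laplace_le hδ.1 hm).trans
      (mul_le_mul_of_nonneg_right (exp_neg_mul_le_sq hδ.1 hgrow) (Z2Laplace_nonneg δ))
  · refine ((isBigO_refl (fun δ : ℝ => δ ^ 2) _).mul Z2Laplace_isBigO).congr' .rfl ?_
    filter_upwards [self_mem_nhdsWithin] with δ hδ
    have := (mem_Ioi.1 hδ).ne'
    field_simp

theorem truncated_TKA_isBigO {μ : ℝ → ℝ} (hμ : ∀ᶠ y in atTop, 2 * y * Real.log y ≤ μ y) :
    (fun δ => (∫ t in (0 : ℝ)..μ (1 / δ), Z2 t * rexp (-2 * δ * t))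
        - 1 / (2 * δ) * Real.log (1 / δ)
        - (Real.eulerMascheroniConstant - Real.log (4 * π)) / (2 * δ) - π)
      =O[𝓝[>] 0] fun δ => δ * Real.log (1 / δ) := by
  refine ((intervalIntegral_Z2_mul_exp_neg_sub_Z2Laplace_isBigO hμ).add
    Z2Laplace_two_mul_sub_log_inv_isBigO).congr_left fun δ => ?_
  ring

end Asymptotics

end TKA

theorem truncated_TKA_formula_general (μ : ℝ → ℝ)
    (hμ : ∀ᶠ y in atTop, 2 * y * Real.log y ≤ μ y) :
    ∃ c₀ C δ₀ : ℝ, 0 < C ∧ 0 < δ₀ ∧ ∀ δ : ℝ, δ ∈ Set.Ioc 0 δ₀ →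
      |(∫ t in (0:ℝ)..μ (1/δ), Z2 t * Real.exp (-2 * δ * t))
          - (1 / (2*δ)) * Real.log (1/δ)
          - (Real.eulerMascheroniConstant - Real.log (4*Real.pi)) / (2*δ) - c₀|
        ≤ C * δ * Real.log (1/δ) := by
  obtain ⟨C, hC, hbound⟩ := (TKA.truncated_TKA_isBigO hμ).exists_pos
  obtain ⟨δ₀, hδ₀, hmem⟩ := mem_nhdsGT_iff_exists_Ioc_subset.1
    (inter_mem hbound.bound (Ioc_mem_nhdsGT zero_lt_one))
  refine ⟨π, C, δ₀, hC, hδ₀, fun δ hδ => ?_⟩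
  obtain ⟨hle, hδ1⟩ := hmem hδ
  have hlog : 0 ≤ Real.log (1 / δ) := Real.log_nonneg (one_le_one_div hδ1.1 hδ1.2)
  rw [mul_assoc, ← Real.norm_of_nonneg (mul_nonneg hδ1.1.le hlog)]
  exact hle

/-- For `μ` in the admissible class, there exist `c₀ ∈ ℝ`, `C > 0`, `δ₀ > 0` such that for all
`δ ∈ (0,δ₀]`:
`|∫₀^{μ(1/δ)} |ζ(1/2+it)|² e^{−2δt} dt − (1/(2δ)) ln(1/δ) − D/(2δ) − c₀| ≤ C δ ln(1/δ)`,
where `D = c − ln(4π)` and `c` is the Euler–Mascheroni constant. -/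
theorem truncated_TKA_formula (y₀ : ℝ) (μ : ℝ → ℝ)
    (hμC : ContDiffOn ℝ (⊤ : ℕ∞) μ (Set.Ici y₀))
    (hμmono : StrictMonoOn μ (Set.Ici y₀))
    (hμtop : Tendsto μ atTop atTop)
    (hμpos : ∀ y ∈ Set.Ici y₀, 0 < μ y)
    (hμgrow : ∀ y ∈ Set.Ici y₀, 7 * y * Real.log y ≤ μ y) :
    ∃ c₀ C δ₀ : ℝ, 0 < C ∧ 0 < δ₀ ∧ ∀ δ : ℝ, δ ∈ Set.Ioc 0 δ₀ →
      |(∫ t in (0:ℝ)..μ (1/δ), Z2 t * Real.exp (-2 * δ * t))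
          - (1 / (2*δ)) * Real.log (1/δ)
          - (Real.eulerMascheroniConstant - Real.log (4*Real.pi)) / (2*δ) - c₀|
        ≤ C * δ * Real.log (1/δ) := by
  refine truncated_TKA_formula_general μ ?_
  filter_upwards [eventually_ge_atTop y₀, eventually_ge_atTop 1] with y hy hy1
  nlinarith [hμgrow y hy, Real.log_nonneg hy1]
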